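/- arXiv:1808.02133 — 3 statements merged into one kernel-verified Lean document; each statement's English description precedes it below -/
import Mathlib

section
/- Extension from the half-space controlling the projected seminorm: Let d ≥ 1, p ∈ [1,∞), s ∈ (0,1) with ps ≠ 1, and let ℝ^d_+ = {x ∈ ℝ^d : x_d > 0}. Then there exists a constant C = C(p,d,s) > 0 such that for every smooth compactly supported vector field f ∈ C_c^∞(ℝ^d_+; ℝ^d) there exists g ∈ L^p(ℝ^d; ℝ^d) with g = f almost everywhere on ℝ^d_+, [g]_{𝒳^s_p(ℝ^d)} < ∞, and [g]_{𝒳^s_p(ℝ^d)} ≤ C · [f]_{𝒳^s_p(ℝ^d_+)}. -/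
open MeasureTheory Filter Set
open scoped ENNReal NNReal Topology

noncomputable section

abbrev Ed (d : ℕ) : Type := EuclideanSpace ℝ (Fin d)

/-- The `p`-th power of the projected Gagliardo seminorm `[f]_{𝒳^s_p(Ω)}^p`. -/
def projGagP (d : ℕ) (s p : ℝ) (Ω : Set (Ed d)) (f : Ed d → Ed d) : ℝ≥0∞ :=
  ∫⁻ x in Ω, ∫⁻ y in Ω,
    ENNReal.ofReal ((|(inner ℝ (f y - f x) (y - x) : ℝ)| / ‖y - x‖) ^ p /
      ‖y - x‖ ^ ((d : ℝ) + s * p))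

/-- The projected Gagliardo seminorm `[f]_{𝒳^s_p(Ω)}`. -/
def projSem (d : ℕ) (s p : ℝ) (Ω : Set (Ed d)) (f : Ed d → Ed d) : ℝ≥0∞ :=
  projGagP d s p Ω f ^ (1 / p)

/-- The `p`-th power of the Gagliardo seminorm `[f]_{W^{s,p}(Ω)}^p`. -/
def gagP (d : ℕ) (s p : ℝ) (Ω : Set (Ed d)) (f : Ed d → Ed d) : ℝ≥0∞ :=
  ∫⁻ x in Ω, ∫⁻ y in Ω,
    ENNReal.ofReal (‖f y - f x‖ ^ p / ‖y - x‖ ^ ((d : ℝ) + s * p))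

/-- The Gagliardo seminorm `[f]_{W^{s,p}(Ω)}`. -/
def gagSem (d : ℕ) (s p : ℝ) (Ω : Set (Ed d)) (f : Ed d → Ed d) : ℝ≥0∞ :=
  gagP d s p Ω f ^ (1 / p)

/-- The upper half-space `ℝ^{d+1}_+ = {x : x_{d+1} > 0}`. -/
def upperHalf (d : ℕ) : Set (Ed (d + 1)) := {x | 0 < x (Fin.last d)}


namespace HSExt

/-- Real kernel. -/
def J (p q D ρ : ℝ) : ℝ := (D / ρ) ^ p / ρ ^ q

lemma J_nonneg {p q D ρ : ℝ} (hD : 0 ≤ D) (hρ : 0 ≤ ρ) : 0 ≤ J p q D ρ := by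
  unfold J; positivity

lemma J_zero_left {p q ρ : ℝ} (hp : 1 ≤ p) : J p q 0 ρ = 0 := by
  unfold J; rw [zero_div, Real.zero_rpow (by linarith), zero_div]

lemma J_zero_right {p q D : ℝ} (hp : 1 ≤ p) : J p q D 0 = 0 := by
  unfold J; rw [div_zero, Real.zero_rpow (by linarith), zero_div]

lemma J_two {p q D ρ : ℝ} (hD : 0 ≤ D) (hρ : 0 ≤ ρ) :
    J p q (2 * D) ρ = 2 ^ p * J p q D ρ := by
  unfold J; rw [mul_div_assoc, Real.mul_rpow (by norm_num) (by positivity), mul_div_assoc]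

lemma J_mono {p q D D' ρ : ℝ} (hp : 1 ≤ p) (hD : 0 ≤ D) (h : D ≤ D') (hρ : 0 ≤ ρ) :
    J p q D ρ ≤ J p q D' ρ := by
  unfold J; gcongr

lemma J_compare {p q D ρ ρ' K : ℝ} (hp : 1 ≤ p) (hq : 0 ≤ q) (hD : 0 ≤ D) (hρ : 0 ≤ ρ)
    (hρ' : 0 ≤ ρ') (hK : 0 < K) (h : ρ' ≤ K * ρ) (h0 : ρ' = 0 → D = 0) :
    J p q D ρ ≤ K ^ (p + q) * J p q D ρ' := by
  rcases hρ.eq_or_lt with h1 | h1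
  · rw [← h1, J_zero_right hp]
    have := J_nonneg (p := p) (q := q) hD hρ'
    positivity
  rcases hρ'.eq_or_lt with h2 | h2
  · rw [h0 h2.symm, J_zero_left hp, J_zero_left hp, mul_zero]
  have e : K ^ (p + q) * J p q D ρ' = (D / (ρ' / K)) ^ p / (ρ' / K) ^ q := by
    unfold J
    have e1 : D / (ρ' / K) = K * (D / ρ') := by field_simp
    rw [e1, Real.rpow_add hK, Real.div_rpow hρ' hK.le, Real.mul_rpow hK.le (by positivity)]
    have : 0 < ρ' ^ q := by positivity
    have : 0 < K ^ q := by positivity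
    field_simp
  rw [e]
  unfold J
  have h3 : ρ' / K ≤ ρ := by rw [div_le_iff₀ hK]; linarith
  have h4 : 0 < ρ' / K := by positivity
  gcongr

lemma rpow_add3 {p a b c : ℝ} (hp : 1 ≤ p) (ha : 0 ≤ a) (hb : 0 ≤ b) (hc : 0 ≤ c) :
    (a + b + c) ^ p ≤ 3 ^ p * (a ^ p + b ^ p + c ^ p) := by
  have hp0 : 0 ≤ p := by linarith
  have key : ∀ m, 0 ≤ m → a ≤ m → b ≤ m → c ≤ m → m ^ p ≤ a ^ p + b ^ p + c ^ p →
      (a + b + c) ^ p ≤ 3 ^ p * (a ^ p + b ^ p + c ^ p) := by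
    intro m hm h1 h2 h3 h4
    calc (a + b + c) ^ p ≤ (3 * m) ^ p := by
          apply Real.rpow_le_rpow (by positivity) (by linarith) hp0
      _ = 3 ^ p * m ^ p := Real.mul_rpow (by norm_num) hm
      _ ≤ _ := by gcongr
  have h1 : 0 ≤ a ^ p := by positivity
  have h2 : 0 ≤ b ^ p := by positivity
  have h3 : 0 ≤ c ^ p := by positivity
  rcases le_total a b with h | h <;> rcases le_total b c with h' | h' <;>
    rcases le_total a c with h'' | h''
  · exact key c hc h'' h' le_rfl (by linarith)
  · exact key c hc (by linarith) h' le_rfl (by linarith)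
  · exact key b hb h le_rfl h' (by linarith)
  · exact key b hb h le_rfl h' (by linarith)
  · exact key c hc h'' h' le_rfl (by linarith)
  · exact key a ha le_rfl h h'' (by linarith)
  · exact key c hc h'' (by linarith) le_rfl (by linarith)
  · exact key a ha le_rfl h h'' (by linarith)

lemma J_add3 {p q a b c ρ : ℝ} (hp : 1 ≤ p) (ha : 0 ≤ a) (hb : 0 ≤ b) (hc : 0 ≤ c)
    (hρ : 0 ≤ ρ) :
    J p q (a + b + c) ρ ≤ 3 ^ p * (J p q a ρ + J p q b ρ + J p q c ρ) := by
  unfold J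
  rw [← add_div, ← add_div, ← mul_div_assoc]
  gcongr
  rw [add_div, add_div]
  exact rpow_add3 hp (by positivity) (by positivity) (by positivity)

variable {d : ℕ}

/-- The kernel. -/
def kern (p q : ℝ) (f : Ed (d+1) → Ed (d+1)) (x y : Ed (d+1)) : ℝ≥0∞ :=
  ENNReal.ofReal (J p q |(inner ℝ (f y - f x) (y - x) : ℝ)| ‖y - x‖)

lemma projGagP_eq (s p : ℝ) (Ω : Set (Ed (d+1))) (f : Ed (d+1) → Ed (d+1)) :
    projGagP (d+1) s p Ω f =
      ∫⁻ x in Ω, ∫⁻ y in Ω, kern p (((d+1 : ℕ) : ℝ) + s * p) f x y := rfl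

lemma kern_symm (p q : ℝ) (f : Ed (d+1) → Ed (d+1)) (x y : Ed (d+1)) :
    kern p q f x y = kern p q f y x := by
  unfold kern
  rw [← neg_sub (f x) (f y), ← neg_sub x y, inner_neg_neg, norm_neg]

lemma kern_meas (p q : ℝ) {f : Ed (d+1) → Ed (d+1)} (hf : Measurable f) :
    Measurable (fun z : Ed (d+1) × Ed (d+1) => kern p q f z.1 z.2) := by
  unfold kern J
  fun_prop

/-- lower half space -/
def lowerHalf (d : ℕ) : Set (Ed (d + 1)) := {x | x (Fin.last d) < 0}

lemma meas_last : Measurable (fun x : Ed (d+1) => x (Fin.last d)) := by fun_prop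

lemma measU : MeasurableSet (upperHalf d) := measurableSet_lt measurable_const meas_last
lemma measL : MeasurableSet (lowerHalf d) := measurableSet_lt meas_last measurable_const

lemma abs_last_le (x : Ed (d+1)) : |x (Fin.last d)| ≤ ‖x‖ := by
  simpa using PiLp.norm_apply_le x (Fin.last d)

/-- The maps `y ↦ y - y_n v`. -/
def A (v y : Ed (d+1)) : Ed (d+1) := y - y (Fin.last d) • v

/-- linear functional -/
def phi : Ed (d+1) →ₗ[ℝ] ℝ := (EuclideanSpace.proj (𝕜 := ℝ) (Fin.last d)).toLinearMap

lemma phi_apply (x : Ed (d+1)) : phi x = x (Fin.last d) := rfl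

lemma A_eq (v : Ed (d+1)) : A v = LinearMap.transvection phi (-v) := by
  ext1 y
  simp [A, LinearMap.transvection.apply, phi_apply, sub_eq_add_neg]

lemma det_A (v : Ed (d+1)) : (LinearMap.transvection phi (-v)).det = 1 - v (Fin.last d) := by
  rw [LinearMap.transvection.det]; simp [phi_apply, sub_eq_add_neg]

lemma A_cont (v : Ed (d+1)) : Continuous (A v) := by
  unfold A; fun_prop

lemma A_last (v y : Ed (d+1)) : A v y (Fin.last d) = -y (Fin.last d) * (v (Fin.last d) - 1) := by
  simp [A]; ring

lemma A_sub (v x y : Ed (d+1)) : A v y - A v x = A v (y - x) := by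
  simp only [A_eq, map_sub]

lemma lintegral_A_le {v : Ed (d+1)} (hv : 2 ≤ v (Fin.last d)) {F : Ed (d+1) → ℝ≥0∞}
    (hF : Measurable F) :
    ∫⁻ y in lowerHalf d, F (A v y) ≤ ∫⁻ y in upperHalf d, F y := by
  have hdet : (LinearMap.transvection phi (-v)).det ≠ 0 := by rw [det_A]; linarith
  have hm := Measure.map_linearMap_addHaar_eq_smul_addHaar (volume : Measure (Ed (d+1))) hdet
  rw [← A_eq, det_A] at hm
  calc ∫⁻ y in lowerHalf d, F (A v y)
      ≤ ∫⁻ y, (upperHalf d).indicator F (A v y) := by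
        rw [← lintegral_indicator measL]
        apply lintegral_mono
        intro y
        by_cases hy : y ∈ lowerHalf d
        · have : A v y ∈ upperHalf d := by
            change 0 < A v y (Fin.last d)
            rw [A_last]
            have : y (Fin.last d) < 0 := hy
            apply mul_pos <;> linarith
          simp [hy, this]
        · simp [hy]
    _ = ∫⁻ y, (upperHalf d).indicator F y ∂(Measure.map (A v) volume) := by
        rw [lintegral_map (hF.indicator measU) (A_cont v).measurable]
    _ ≤ ∫⁻ y, (upperHalf d).indicator F y := by
        rw [hm, lintegral_smul_measure]
        conv_rhs => rw [← one_mul (∫⁻ y, (upperHalf d).indicator F y)]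
        rw [smul_eq_mul]
        gcongr
        rw [ENNReal.ofReal_le_one, abs_inv]
        apply inv_le_one_of_one_le₀
        rw [abs_sub_comm, abs_of_nonneg] <;> linarith
    _ = _ := lintegral_indicator measU _

lemma lintegral_split (F : Ed (d+1) → ℝ≥0∞) :
    ∫⁻ x, F x = (∫⁻ x in upperHalf d, F x) + ∫⁻ x in lowerHalf d, F x := by
  rw [← lintegral_add_compl F (measU (d := d))]
  congr 1
  apply setLIntegral_congr
  have h0 : volume ((LinearMap.ker (phi (d := d)) : Submodule ℝ (Ed (d+1))) : Set (Ed (d+1))) = 0 := by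
    apply Measure.addHaar_submodule
    intro h
    have : EuclideanSpace.single (Fin.last d) (1:ℝ) ∈ LinearMap.ker (phi (d := d)) := by
      rw [h]; trivial
    simp [phi_apply] at this
  have h1 : ∀ᵐ x : Ed (d+1), x ∉ ((LinearMap.ker (phi (d := d)) : Submodule ℝ (Ed (d+1))) : Set (Ed (d+1))) := by
    exact measure_eq_zero_iff_ae_notMem.mp h0
  filter_upwards [h1] with x hx
  have hx' : x (Fin.last d) ≠ 0 := hx
  apply propext
  change ¬ (0 < x (Fin.last d)) ↔ x (Fin.last d) < 0
  rw [not_lt]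
  exact ⟨fun h => lt_of_le_of_ne h hx', le_of_lt⟩

lemma lintegral_scale {t : ℝ} (ht : 0 < t) {F : Ed (d+1) → ℝ≥0∞} (hF : Measurable F) :
    ENNReal.ofReal (t ^ ((d+1 : ℕ) : ℝ)) * ∫⁻ v, F (t • v) = ∫⁻ z, F z := by
  have hm := Measure.map_addHaar_smul (volume : Measure (Ed (d+1))) ht.ne'
  rw [← lintegral_map (f := F) (g := fun v => t • v) hF (by fun_prop), hm, lintegral_smul_measure,
    smul_eq_mul, ← mul_assoc, finrank_euclideanSpace_fin, ← ENNReal.ofReal_mul (by positivity),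
    abs_of_pos (by positivity), Real.rpow_natCast, mul_inv_cancel₀ (by positivity)]
  simp


/-- tail constant -/
def tailC (d : ℕ) (q : ℝ) : ℝ≥0∞ :=
  ENNReal.ofReal (2 ^ q) * ∫⁻ z : Ed (d+1), ENNReal.ofReal ((1 + ‖z‖) ^ (-q))

lemma tailC_lt_top {q : ℝ} (hq : ((d+1 : ℕ) : ℝ) < q) : tailC d q < ∞ := by
  apply ENNReal.mul_lt_top ENNReal.ofReal_lt_top
  apply finite_integral_one_add_norm
  rwa [finrank_euclideanSpace_fin]

lemma tail_bound {q t : ℝ} (hq : ((d+1 : ℕ) : ℝ) < q) {y : Ed (d+1)}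
    (ht : t = - y (Fin.last d)) (hy : y ∈ lowerHalf d) :
    ∫⁻ x in upperHalf d, ENNReal.ofReal (‖y - x‖ ^ (-q)) ≤
      tailC d q * ENNReal.ofReal (t ^ (((d+1 : ℕ) : ℝ) - q)) := by
  have hy' : y (Fin.last d) < 0 := hy
  have ht0 : 0 < t := by linarith
  have hq0 : 0 < q := lt_of_le_of_lt (by positivity) hq
  let F : Ed (d+1) → ℝ≥0∞ := fun z => ENNReal.ofReal ((t + ‖z‖) ^ (-q))
  have hF : Measurable F := by unfold F; fun_prop
  calc ∫⁻ x in upperHalf d, ENNReal.ofReal (‖y - x‖ ^ (-q))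
      ≤ ∫⁻ x in upperHalf d, ENNReal.ofReal (2 ^ q) * F (y - x) := by
        apply setLIntegral_mono' measU
        intro x hx
        have hx' : 0 < x (Fin.last d) := hx
        have h1 : t ≤ ‖y - x‖ := by
          have := abs_last_le (y - x)
          rw [PiLp.sub_apply, abs_le] at this
          linarith [this.1]
        rw [← ENNReal.ofReal_mul (by positivity)]
        apply ENNReal.ofReal_le_ofReal
        have h2 : 0 < ‖y - x‖ := by linarith
        have e : (2:ℝ) ^ q * (t + ‖y - x‖) ^ (-q) = ((t + ‖y - x‖) / 2) ^ (-q) := by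
          rw [Real.div_rpow (by positivity) (by norm_num), Real.rpow_neg (x := 2) (by norm_num),
            div_inv_eq_mul, mul_comm]
        rw [e]
        apply Real.rpow_le_rpow_of_nonpos (by positivity) (by linarith) (by linarith)
    _ ≤ ∫⁻ x, ENNReal.ofReal (2 ^ q) * F (y - x) := setLIntegral_le_lintegral _ _
    _ = ENNReal.ofReal (2 ^ q) * ∫⁻ x, F x := by
        rw [lintegral_const_mul _ (by fun_prop), lintegral_sub_left_eq_self]
    _ = ENNReal.ofReal (2 ^ q) * (ENNReal.ofReal (t ^ ((d+1 : ℕ) : ℝ)) * ∫⁻ v, F (t • v)) := by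
        rw [lintegral_scale ht0 hF]
    _ = ENNReal.ofReal (2 ^ q) * (ENNReal.ofReal (t ^ ((d+1 : ℕ) : ℝ)) *
          (ENNReal.ofReal (t ^ (-q)) * ∫⁻ z : Ed (d+1), ENNReal.ofReal ((1 + ‖z‖) ^ (-q)))) := by
        congr 2
        rw [← lintegral_const_mul _ (by fun_prop)]
        apply lintegral_congr
        intro v
        unfold F
        rw [← ENNReal.ofReal_mul (by positivity), norm_smul, Real.norm_of_nonneg ht0.le,
          ← Real.mul_rpow (by positivity) (by positivity)]
        ring_nf
    _ = _ := by
        unfold tailC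
        rw [sub_eq_add_neg, Real.rpow_add ht0, ENNReal.ofReal_mul (by positivity)]
        ring

/-- The quantity to be averaged over `v`. -/
def Phi (p r : ℝ) (f : Ed (d+1) → Ed (d+1)) (v : Ed (d+1)) : ℝ≥0∞ :=
  ∫⁻ y in lowerHalf d, ENNReal.ofReal
    (|(inner ℝ (f (A ((2:ℝ) • v) y) - f (A v y)) v : ℝ)| ^ p * (-y (Fin.last d)) ^ (-r))

lemma A_meas2 : Measurable (fun z : Ed (d+1) × Ed (d+1) => A z.1 z.2) := by
  unfold A; fun_prop

lemma Phi_meas (p r : ℝ) {f : Ed (d+1) → Ed (d+1)} (hf : Measurable f) : Measurable (fun z : Ed (d+1) × Ed (d+1) => ENNReal.ofReal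
    (|(inner ℝ (f (A ((2:ℝ) • z.1) z.2) - f (A z.1 z.2)) z.1 : ℝ)| ^ p * (-z.2 (Fin.last d)) ^ (-r))) := by
  unfold A
  fun_prop

/-- ball of directions -/
def VV (d : ℕ) : Set (Ed (d+1)) := Metric.ball (EuclideanSpace.single (Fin.last d) 3) 1

lemma VV_last {v : Ed (d+1)} (hv : v ∈ VV d) : 2 ≤ v (Fin.last d) := by
  have h : ‖v - EuclideanSpace.single (Fin.last d) 3‖ < 1 := by
    simpa [VV, dist_eq_norm] using hv
  have := abs_last_le (v - EuclideanSpace.single (Fin.last d) 3)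
  rw [PiLp.sub_apply, abs_le] at this
  simp at this
  linarith [this.1]

lemma VV_norm {v : Ed (d+1)} (hv : v ∈ VV d) : ‖v‖ ≤ 4 := by
  have h : ‖v - EuclideanSpace.single (Fin.last d) 3‖ < 1 := by
    simpa [VV, dist_eq_norm] using hv
  have := norm_le_norm_add_norm_sub' v (EuclideanSpace.single (Fin.last d) 3)
  simp at this
  linarith

lemma avg_bound {p s : ℝ} (hp : 1 ≤ p) (hs : 0 < s) {f : Ed (d+1) → Ed (d+1)}
    (hf : Measurable f) :
    ∫⁻ v in VV d, Phi p (s * p) f v ≤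
      ENNReal.ofReal (4 ^ (p + (((d+1 : ℕ) : ℝ) + s * p))) * projGagP (d+1) s p (upperHalf d) f := by
  set n : ℝ := ((d+1 : ℕ) : ℝ) with hn
  set q : ℝ := n + s * p with hq
  have hq0 : 0 ≤ q := by positivity
  let H : Ed (d+1) × Ed (d+1) → ℝ≥0∞ := (upperHalf d ×ˢ upperHalf d).indicator
    (fun z => kern p q f z.1 z.2)
  have hH : Measurable H := (kern_meas p q hf).indicator (measU.prod measU)
  have hHp : ∫⁻ w, ∫⁻ b, H (w, b) = projGagP (d+1) s p (upperHalf d) f := by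
    rw [projGagP_eq, ← lintegral_indicator measU]
    apply lintegral_congr
    intro w
    by_cases hw : w ∈ upperHalf d
    · rw [indicator_of_mem hw, ← lintegral_indicator measU]
      apply lintegral_congr
      intro b
      by_cases hb : b ∈ upperHalf d <;> simp [H, hw, hb, ← hn, ← hq]
    · simp [H, hw]
  have step1 : ∀ y ∈ lowerHalf d, ∫⁻ v in VV d, ENNReal.ofReal
      (|(inner ℝ (f (A ((2:ℝ) • v) y) - f (A v y)) v : ℝ)| ^ p * (-y (Fin.last d)) ^ (-(s*p))) ≤
      ENNReal.ofReal (4 ^ (p + q)) * ∫⁻ z, H (y + z, y + z + z) := by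
    intro y hy
    have hy' : y (Fin.last d) < 0 := hy
    set t := - y (Fin.last d) with ht
    have ht0 : 0 < t := by linarith
    have hm : Measurable (fun z => H (y + z, y + z + z)) := by fun_prop
    rw [← lintegral_scale ht0 hm, ← lintegral_const_mul _ (by fun_prop),
      ← lintegral_const_mul _ (by fun_prop)]
    refine le_trans (setLIntegral_mono' (g := fun a => ENNReal.ofReal (4 ^ (p + q)) * (ENNReal.ofReal (t ^ ((d+1 : ℕ) : ℝ)) * H (y + t • a, y + t • a + t • a))) Metric.isOpen_ball.measurableSet ?_) (setLIntegral_le_lintegral _ _)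
    intro v hv
    have hv2 := VV_last hv
    have hv4 := VV_norm hv
    have hA1 : A v y = y + t • v := by simp [A, ht, sub_eq_add_neg]
    have hA2 : A ((2:ℝ) • v) y = y + t • v + t • v := by
      simp only [A, ht]; module
    have hU1 : y + t • v ∈ upperHalf d := by
      change 0 < (y + t • v) (Fin.last d)
      simp only [PiLp.add_apply, PiLp.smul_apply, smul_eq_mul]
      nlinarith
    have hU2 : y + t • v + t • v ∈ upperHalf d := by
      change 0 < (y + t • v + t • v) (Fin.last d)
      simp only [PiLp.add_apply, PiLp.smul_apply, smul_eq_mul]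
      nlinarith
    have hHv : H (y + t • v, y + t • v + t • v) = kern p q f (y + t • v) (y + t • v + t • v) := by
      simp [H, hU1, hU2]
    rw [hHv, hA1, hA2]
    unfold kern
    rw [add_sub_cancel_left, ← ENNReal.ofReal_mul (by positivity), ← ENNReal.ofReal_mul (by positivity)]
    apply ENNReal.ofReal_le_ofReal
    set w := f (y + t • v + t • v) - f (y + t • v)
    have hJ := J_compare (p := p) (q := q) (D := |(inner ℝ w (t • v) : ℝ)|) (ρ := t) (ρ' := ‖t • v‖) (K := 4)
      hp hq0 (abs_nonneg _) ht0.le (norm_nonneg _) (by norm_num)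
      (by rw [norm_smul, Real.norm_of_nonneg ht0.le]; nlinarith)
      (by intro h; rw [norm_eq_zero.mp h]; simp)
    have hL : |(inner ℝ w v : ℝ)| ^ p * t ^ (-(s*p)) = t ^ n * J p q |(inner ℝ w (t • v) : ℝ)| t := by
      unfold J
      rw [inner_smul_right, abs_mul, abs_of_pos ht0, mul_div_cancel_left₀ _ ht0.ne', hq,
        Real.rpow_add ht0, Real.rpow_neg ht0.le]
      have : 0 < t ^ n := by positivity
      have : 0 < t ^ (s * p) := by positivity
      field_simp
    rw [hL, ← hn]
    calc _ ≤ t ^ n * (4 ^ (p + q) * J p q |(inner ℝ w (t • v) : ℝ)| ‖t • v‖) := by gcongr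
      _ = _ := by ring
  calc ∫⁻ v in VV d, Phi p (s * p) f v
      = ∫⁻ y in lowerHalf d, ∫⁻ v in VV d, ENNReal.ofReal
          (|(inner ℝ (f (A ((2:ℝ) • v) y) - f (A v y)) v : ℝ)| ^ p * (-y (Fin.last d)) ^ (-(s*p))) := by
        unfold Phi
        rw [lintegral_lintegral_swap]
        exact (Phi_meas p (s*p) hf).aemeasurable
    _ ≤ ∫⁻ y in lowerHalf d, ENNReal.ofReal (4 ^ (p + q)) * ∫⁻ z, H (y + z, y + z + z) :=
        setLIntegral_mono' measL step1
    _ ≤ ∫⁻ y, ENNReal.ofReal (4 ^ (p + q)) * ∫⁻ z, H (y + z, y + z + z) :=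
        setLIntegral_le_lintegral _ _
    _ = ENNReal.ofReal (4 ^ (p + q)) * ∫⁻ y, ∫⁻ z, H (y + z, y + z + z) := by
        rw [lintegral_const_mul]
        apply Measurable.lintegral_prod_right' (f := fun a : Ed (d+1) × Ed (d+1) => H (a.1 + a.2, a.1 + a.2 + a.2))
        fun_prop
    _ = ENNReal.ofReal (4 ^ (p + q)) * ∫⁻ z, ∫⁻ y, H (y + z, y + z + z) := by
        rw [lintegral_lintegral_swap]
        apply Measurable.aemeasurable
        change Measurable (fun a : Ed (d+1) × Ed (d+1) => H (a.1 + a.2, a.1 + a.2 + a.2))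
        fun_prop
    _ = ENNReal.ofReal (4 ^ (p + q)) * ∫⁻ z, ∫⁻ w, H (w, w + z) := by
        congr 1
        apply lintegral_congr
        intro z
        exact lintegral_add_right_eq_self (fun w => H (w, w + z)) z
    _ = ENNReal.ofReal (4 ^ (p + q)) * ∫⁻ w, ∫⁻ z, H (w, w + z) := by
        rw [lintegral_lintegral_swap]
        apply Measurable.aemeasurable
        change Measurable (fun a : Ed (d+1) × Ed (d+1) => H (a.2, a.2 + a.1))
        fun_prop
    _ = ENNReal.ofReal (4 ^ (p + q)) * ∫⁻ w, ∫⁻ b, H (w, b) := by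
        congr 1
        apply lintegral_congr
        intro w
        exact lintegral_add_left_eq_self (fun b => H (w, b)) w
    _ = _ := by rw [hHp]

lemma exists_v {p s : ℝ} (hp : 1 ≤ p) (hs : 0 < s) {f : Ed (d+1) → Ed (d+1)}
    (hf : Measurable f) : ∃ v ∈ VV d, Phi p (s * p) f v ≤
      (ENNReal.ofReal (4 ^ (p + (((d+1 : ℕ) : ℝ) + s * p))) / volume (VV d)) *
        projGagP (d+1) s p (upperHalf d) f := by
  have h0 : volume (VV d) ≠ 0 := (Metric.measure_ball_pos _ _ one_pos).ne'
  have h1 : volume (VV d) ≠ ∞ := measure_ball_lt_top.ne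
  obtain ⟨v, hv, h⟩ := exists_le_setLAverage (μ := volume) (s := VV d) (f := Phi p (s*p) f) h0 h1
    (by
      unfold Phi
      exact (Measurable.lintegral_prod_right' (Phi_meas p (s*p) hf)).aemeasurable)
  refine ⟨v, hv, h.trans ?_⟩
  rw [setLAverage_eq, div_eq_mul_inv, div_eq_mul_inv, mul_right_comm]
  gcongr
  exact avg_bound hp hs hf


/-- near-diagonal majorant -/
def mm (p q : ℝ) (z : Ed (d+1)) : ℝ≥0∞ :=
  ENNReal.ofReal (J p q (‖z‖ * min ‖z‖ 1) ‖z‖)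

lemma mm_meas (p q : ℝ) : Measurable (mm (d := d) p q) := by
  unfold mm J; fun_prop

lemma mm_finite {p s : ℝ} (hp : 1 ≤ p) (hs : s ∈ Set.Ioo (0:ℝ) 1) :
    ∫⁻ z, mm (d := d) p (((d+1 : ℕ) : ℝ) + s * p) z < ∞ := by
  set n : ℝ := ((d+1 : ℕ) : ℝ) with hn
  set q : ℝ := n + s * p with hq
  have hsp : 0 < s * p := mul_pos hs.1 (by linarith)
  have hq0 : 0 < q := by positivity
  have hnq : n < q := by linarith
  have hI : IntegrableOn (fun z : Ed (d+1) => ‖z‖ ^ (-(q - p))) (Metric.ball 0 1) volume := by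
    refine integrableOn_ball_of_norm_le_rpow (C := 1) (α := q - p) ?_ ?_ ?_ ?_
    · rw [finrank_euclideanSpace_fin]; omega
    · rw [finrank_euclideanSpace_fin, ← hn]
      have : s * p < p := by nlinarith [hs.2]
      linarith
    · refine Eventually.of_forall fun x => ?_
      rw [one_mul, Real.norm_of_nonneg (by positivity)]
    · apply Measurable.aestronglyMeasurable; fun_prop
  have h1 : ∫⁻ z : Ed (d+1) in Metric.ball 0 1, mm p q z < ∞ := by
    refine lt_of_le_of_lt ?_ hI.lintegral_lt_top
    apply lintegral_mono
    intro z
    apply ENNReal.ofReal_le_ofReal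
    rcases (norm_nonneg z).eq_or_lt with h | h
    · rw [← h, J_zero_right hp]; positivity
    · unfold J
      rw [mul_div_cancel_left₀ _ h.ne', neg_sub, Real.rpow_sub h]
      gcongr
      exact min_le_left _ _
  have h2 : ∫⁻ z : Ed (d+1) in (Metric.ball 0 1)ᶜ, mm p q z < ∞ := by
    refine lt_of_le_of_lt ?_ (tailC_lt_top hnq)
    unfold tailC
    rw [← lintegral_const_mul _ (by fun_prop)]
    refine le_trans (setLIntegral_mono' (g := fun z => ENNReal.ofReal (2 ^ q) * ENNReal.ofReal ((1 + ‖z‖) ^ (-q))) Metric.isOpen_ball.measurableSet.compl ?_)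
      (setLIntegral_le_lintegral _ _)
    intro z hz
    have hz1 : 1 ≤ ‖z‖ := by simpa using hz
    rw [← ENNReal.ofReal_mul (by positivity)]
    apply ENNReal.ofReal_le_ofReal
    have e : (2:ℝ) ^ q * (1 + ‖z‖) ^ (-q) = ((1 + ‖z‖) / 2) ^ (-q) := by
      rw [Real.div_rpow (by positivity) (by norm_num), Real.rpow_neg (x := 2) (by norm_num),
        div_inv_eq_mul, mul_comm]
    have h : 0 < ‖z‖ := by linarith
    rw [e]
    unfold J
    rw [min_eq_right hz1, mul_one, div_self h.ne', Real.one_rpow, one_div, ← Real.rpow_neg h.le]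
    apply Real.rpow_le_rpow_of_nonpos (by positivity) (by linarith) (by linarith)
  rw [← lintegral_add_compl (mm p q) (Metric.isOpen_ball (x := (0 : Ed (d+1))) (ε := 1)).measurableSet]
  exact ENNReal.add_lt_top.mpr ⟨h1, h2⟩

lemma proj_finite {p s : ℝ} (hp : 1 ≤ p) (hs : s ∈ Set.Ioo (0:ℝ) 1) {f : Ed (d+1) → Ed (d+1)}
    (hf : ContDiff ℝ (⊤ : ℕ∞) f) (hc : HasCompactSupport f) (Ω : Set (Ed (d+1))) :
    projGagP (d+1) s p Ω f < ∞ := by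
  rw [projGagP_eq]
  set q : ℝ := ((d+1 : ℕ) : ℝ) + s * p with hq
  obtain ⟨K, hK⟩ := hf.lipschitzWith_of_hasCompactSupport hc (by simp)
  obtain ⟨B, hB⟩ := hc.exists_bound_of_continuous hf.continuous
  have hB0 : 0 ≤ B := (norm_nonneg _).trans (hB 0)
  set C : ℝ := max K (2 * B) with hC
  have hC0 : 0 ≤ C := le_max_of_le_right (by positivity)
  have hfC : ∀ x y, ‖f y - f x‖ ≤ C * min ‖y - x‖ 1 := by
    intro x y
    rcases le_total ‖y - x‖ 1 with h | h
    · rw [min_eq_left h]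
      refine (hK.norm_sub_le y x).trans ?_
      gcongr
      exact le_max_left _ _
    · rw [min_eq_right h, mul_one]
      refine (norm_sub_le _ _).trans (le_trans ?_ (le_max_right _ _))
      linarith [hB x, hB y]
  set S := tsupport f with hS
  have hSm : MeasurableSet S := (isClosed_tsupport f).measurableSet
  let c : ℝ≥0∞ := ENNReal.ofReal (C ^ p)
  have hpt : ∀ x y, kern p q f x y ≤ S.indicator (fun _ => c * mm p q (y - x)) x +
      S.indicator (fun _ => c * mm p q (y - x)) y := by
    intro x y
    have hk : kern p q f x y ≤ c * mm p q (y - x) := by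
      unfold kern mm c
      rw [← ENNReal.ofReal_mul (by positivity)]
      apply ENNReal.ofReal_le_ofReal
      have e : C ^ p * J p q (‖y - x‖ * min ‖y - x‖ 1) ‖y - x‖ =
          J p q (C * (‖y - x‖ * min ‖y - x‖ 1)) ‖y - x‖ := by
        unfold J
        rw [mul_div_assoc C, Real.mul_rpow hC0 (by positivity), mul_div_assoc (C ^ p)]
      rw [e]
      apply J_mono hp (abs_nonneg _) _ (norm_nonneg _)
      refine (abs_real_inner_le_norm _ _).trans ?_
      calc _ ≤ C * min ‖y - x‖ 1 * ‖y - x‖ := by gcongr; exact hfC x y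
        _ = _ := by ring
    by_cases hx : x ∈ S
    · rw [indicator_of_mem hx]; exact hk.trans le_self_add
    by_cases hy : y ∈ S
    · rw [indicator_of_mem hy]; exact hk.trans le_add_self
    · have : kern p q f x y = 0 := by
        unfold kern
        rw [image_eq_zero_of_notMem_tsupport hx, image_eq_zero_of_notMem_tsupport hy]
        simp [J_zero_left hp]
      rw [this]; exact zero_le
  have hmf : ∫⁻ z, mm (d := d) p q z < ∞ := mm_finite hp hs
  have hSf : volume S < ∞ := hc.isCompact.measure_lt_top
  have hmm := mm_meas (d := d) p q
  have m1 : Measurable (fun z : Ed (d+1) × Ed (d+1) => S.indicator (fun _ => c * mm p q (z.2 - z.1)) z.1) := by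
    have : (fun z : Ed (d+1) × Ed (d+1) => S.indicator (fun _ => c * mm p q (z.2 - z.1)) z.1) =
      (Prod.fst ⁻¹' S).indicator (fun z => c * mm p q (z.2 - z.1)) := by
        ext z; rfl
    rw [this]
    exact Measurable.indicator (by fun_prop) (measurable_fst hSm)
  have m2 : Measurable (fun z : Ed (d+1) × Ed (d+1) => S.indicator (fun _ => c * mm p q (z.2 - z.1)) z.2) := by
    have : (fun z : Ed (d+1) × Ed (d+1) => S.indicator (fun _ => c * mm p q (z.2 - z.1)) z.2) =
      (Prod.snd ⁻¹' S).indicator (fun z => c * mm p q (z.2 - z.1)) := by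
        ext z; rfl
    rw [this]
    exact Measurable.indicator (by fun_prop) (measurable_snd hSm)
  have i1 : ∫⁻ x, ∫⁻ y, S.indicator (fun _ => c * mm p q (y - x)) x =
      c * (∫⁻ z, mm (d := d) p q z) * volume S := by
    rw [← setLIntegral_const, ← lintegral_indicator hSm]
    apply lintegral_congr
    intro x
    by_cases hx : x ∈ S
    · simp only [indicator_of_mem hx]
      rw [lintegral_const_mul _ (by fun_prop), lintegral_sub_right_eq_self]
    · simp [indicator_of_notMem hx]
  have i2 : ∫⁻ x, ∫⁻ y, S.indicator (fun _ => c * mm p q (y - x)) y =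
      c * (∫⁻ z, mm (d := d) p q z) * volume S := by
    rw [lintegral_lintegral_swap m2.aemeasurable, ← setLIntegral_const, ← lintegral_indicator hSm]
    apply lintegral_congr
    intro x
    by_cases hx : x ∈ S
    · simp only [indicator_of_mem hx]
      rw [lintegral_const_mul _ (by fun_prop), lintegral_sub_left_eq_self]
    · simp [indicator_of_notMem hx]
  have hcS : c * (∫⁻ z, mm (d := d) p q z) * volume S < ∞ :=
    ENNReal.mul_lt_top (ENNReal.mul_lt_top ENNReal.ofReal_lt_top hmf) hSf
  calc ∫⁻ x in Ω, ∫⁻ y in Ω, kern p q f x y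
      ≤ ∫⁻ x, ∫⁻ y, kern p q f x y :=
        (setLIntegral_le_lintegral _ _).trans
          (lintegral_mono fun x => setLIntegral_le_lintegral _ _)
    _ ≤ ∫⁻ x, ∫⁻ y, (S.indicator (fun _ => c * mm p q (y - x)) x +
          S.indicator (fun _ => c * mm p q (y - x)) y) :=
        lintegral_mono fun x => lintegral_mono fun y => hpt x y
    _ = (∫⁻ x, ∫⁻ y, S.indicator (fun _ => c * mm p q (y - x)) x) +
          ∫⁻ x, ∫⁻ y, S.indicator (fun _ => c * mm p q (y - x)) y := by
        rw [← lintegral_add_left (Measurable.lintegral_prod_right' m1)]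
        apply lintegral_congr
        intro x
        exact lintegral_add_left (m1.comp (measurable_prodMk_left (x := x))) _
    _ < ∞ := by rw [i1, i2]; exact ENNReal.add_lt_top.mpr ⟨hcS, hcS⟩

/-- The transpose of `A v`. -/
def At (v w : Ed (d+1)) : Ed (d+1) :=
  w - (inner ℝ v w : ℝ) • EuclideanSpace.single (Fin.last d) (1:ℝ)

lemma At_inner (v w u : Ed (d+1)) : (inner ℝ (At v w) u : ℝ) = inner ℝ w (A v u) := by
  simp only [At, A, inner_sub_left, inner_sub_right, inner_smul_left, inner_smul_right,
    EuclideanSpace.inner_single_left, real_inner_comm v w]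
  simp; ring

lemma At_cont (v : Ed (d+1)) : Continuous (At v) := by unfold At; fun_prop

/-- The extension. -/
def ext (v : Ed (d+1)) (f : Ed (d+1) → Ed (d+1)) (y : Ed (d+1)) : Ed (d+1) :=
  (upperHalf d).indicator f y + (lowerHalf d).indicator
    (fun y => (2:ℝ) • At v (f (A v y)) - At ((2:ℝ) • v) (f (A ((2:ℝ) • v) y))) y

lemma ext_U (v : Ed (d+1)) (f : Ed (d+1) → Ed (d+1)) {y : Ed (d+1)} (hy : y ∈ upperHalf d) :
    ext v f y = f y := by
  have : y ∉ lowerHalf d := by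
    intro h
    have h1 : 0 < y (Fin.last d) := hy
    have h2 : y (Fin.last d) < 0 := h
    linarith
  simp [ext, hy, this]

lemma ext_L (v : Ed (d+1)) (f : Ed (d+1) → Ed (d+1)) {y : Ed (d+1)} (hy : y ∈ lowerHalf d) :
    ext v f y = (2:ℝ) • At v (f (A v y)) - At ((2:ℝ) • v) (f (A ((2:ℝ) • v) y)) := by
  have : y ∉ upperHalf d := by
    intro h
    have h1 : 0 < y (Fin.last d) := h
    have h2 : y (Fin.last d) < 0 := hy
    linarith
  simp [ext, hy, this]

lemma ext_meas (v : Ed (d+1)) {f : Ed (d+1) → Ed (d+1)} (hf : Measurable f) :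
    Measurable (ext v f) := by
  have h1 := fun v => (A_cont (d := d) v).measurable
  have h2 := fun v => (At_cont (d := d) v).measurable
  unfold ext
  refine (hf.indicator measU).add (Measurable.indicator ?_ measL)
  exact (((h2 v).comp (hf.comp (h1 v))).const_smul (2:ℝ)).sub ((h2 _).comp (hf.comp (h1 _)))

lemma comp_A_memLp {v : Ed (d+1)} (hv : 2 ≤ v (Fin.last d)) {f : Ed (d+1) → Ed (d+1)} (hf : Continuous f)
    (hc : HasCompactSupport f) (P : ℝ≥0∞) : MemLp (fun y => At v (f (A v y))) P volume := by
  have hdet : IsUnit (LinearMap.transvection phi (-v)).det := by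
    rw [det_A, isUnit_iff_ne_zero]; linarith
  let e := LinearEquiv.ofIsUnitDet (f := LinearMap.transvection phi (-v)) (v := (EuclideanSpace.basisFun (Fin (d+1)) ℝ).toBasis) (v' := (EuclideanSpace.basisFun (Fin (d+1)) ℝ).toBasis) (by rwa [LinearMap.det_toMatrix])
  have he : ∀ y, e y = A v y := by intro y; rw [A_eq]; rfl
  have h1 : HasCompactSupport (f ∘ e.toContinuousLinearEquiv.toHomeomorph) :=
    hc.comp_homeomorph _
  have h2 : HasCompactSupport (fun y => At v (f (A v y))) := by
    have := h1.comp_left (g := At v) (by simp [At])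
    convert this using 2
    simp [← he]
  exact Continuous.memLp_of_hasCompactSupport ((At_cont v).comp (hf.comp (A_cont v))) h2

lemma ext_memLp {v : Ed (d+1)} (hv : 2 ≤ v (Fin.last d)) {f : Ed (d+1) → Ed (d+1)} (hf : Continuous f)
    (hc : HasCompactSupport f) (P : ℝ≥0∞) : MemLp (ext v f) P volume := by
  have h1 : MemLp f P volume := hf.memLp_of_hasCompactSupport hc
  have h2 := comp_A_memLp hv hf hc P
  have h3 := comp_A_memLp (v := (2:ℝ) • v) (by simp; linarith) hf hc P
  exact (h1.indicator measU).add (((h2.const_smul (2:ℝ)).sub h3).indicator measL)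


lemma J_comb {p q D D1 D2 X ρ ρ1 ρ2 : ℝ} (hp : 1 ≤ p) (hq : 0 ≤ q) (hD : 0 ≤ D) (hD1 : 0 ≤ D1)
    (hD2 : 0 ≤ D2) (hX : 0 ≤ X) (hρ : 0 ≤ ρ) (hρ1 : 0 ≤ ρ1) (hρ2 : 0 ≤ ρ2)
    (h : D ≤ 2 * D1 + D2 + 2 * X) (h1 : ρ1 ≤ 9 * ρ) (h2 : ρ2 ≤ 9 * ρ)
    (z1 : ρ1 = 0 → D1 = 0) (z2 : ρ2 = 0 → D2 = 0) :
    J p q D ρ ≤ (3 ^ p * 2 ^ p * 9 ^ (p + q)) * (J p q D1 ρ1 + J p q D2 ρ2 + J p q X ρ) := by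
  have a1 := J_compare hp hq hD1 hρ hρ1 (by norm_num) h1 z1
  have a2 := J_compare hp hq hD2 hρ hρ2 (by norm_num) h2 z2
  have n1 := J_nonneg (p := p) (q := q) hD1 hρ1
  have n2 := J_nonneg (p := p) (q := q) hD2 hρ2
  have n3 := J_nonneg (p := p) (q := q) hX hρ
  have n4 := J_nonneg (p := p) (q := q) hD2 hρ
  have t1 : (1:ℝ) ≤ 2 ^ p := Real.one_le_rpow (by norm_num) (by linarith)
  have t2 : (1:ℝ) ≤ 9 ^ (p + q) := Real.one_le_rpow (by norm_num) (by linarith)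
  calc J p q D ρ ≤ J p q (2 * D1 + D2 + 2 * X) ρ := J_mono hp hD h hρ
    _ ≤ 3 ^ p * (J p q (2 * D1) ρ + J p q D2 ρ + J p q (2 * X) ρ) :=
        J_add3 hp (by positivity) hD2 (by positivity) hρ
    _ = 3 ^ p * (2 ^ p * J p q D1 ρ + 1 * J p q D2 ρ + 2 ^ p * (1 * J p q X ρ)) := by
        rw [J_two hD1 hρ, J_two hX hρ]; ring
    _ ≤ 3 ^ p * (2 ^ p * (9 ^ (p + q) * J p q D1 ρ1) + 2 ^ p * (9 ^ (p + q) * J p q D2 ρ2)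
          + 2 ^ p * (9 ^ (p + q) * J p q X ρ)) := by
        gcongr
    _ = _ := by ring

/-- constant -/
def c1 (p q : ℝ) : ℝ≥0∞ := ENNReal.ofReal (3 ^ p * 2 ^ p * 9 ^ (p + q))

lemma norm_A_le {v : Ed (d+1)} (hv : ‖v‖ ≤ 8) (z : Ed (d+1)) : ‖A v z‖ ≤ 9 * ‖z‖ := by
  unfold A
  refine (norm_sub_le _ _).trans ?_
  rw [norm_smul, Real.norm_eq_abs]
  have := abs_last_le z
  have h : |z (Fin.last d)| * ‖v‖ ≤ ‖z‖ * 8 := by gcongr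
  linarith

lemma norm_A_sub_le {v : Ed (d+1)} (hv : ‖v‖ ≤ 8) {x y : Ed (d+1)} (hx : x ∈ upperHalf d)
    (hy : y ∈ lowerHalf d) : ‖A v y - x‖ ≤ 9 * ‖y - x‖ := by
  have hx' : 0 < x (Fin.last d) := hx
  have hy' : y (Fin.last d) < 0 := hy
  have e : A v y - x = (y - x) - y (Fin.last d) • v := by unfold A; abel
  rw [e]
  refine (norm_sub_le _ _).trans ?_
  rw [norm_smul, Real.norm_eq_abs]
  have := abs_last_le (y - x)
  have h0 : |y (Fin.last d)| ≤ ‖y - x‖ := by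
    rw [PiLp.sub_apply, abs_le] at this
    rw [abs_of_neg hy']
    linarith [this.1]
  have h : |y (Fin.last d)| * ‖v‖ ≤ ‖y - x‖ * 8 := by gcongr
  linarith

lemma norm_two_smul {v : Ed (d+1)} (hv : v ∈ VV d) : ‖(2:ℝ) • v‖ ≤ 8 := by
  rw [norm_smul]; have := VV_norm hv; norm_num; linarith

lemma pt_LL {p q : ℝ} (hp : 1 ≤ p) (hq : 0 ≤ q) {v : Ed (d+1)} (hv : v ∈ VV d)
    (f : Ed (d+1) → Ed (d+1)) {x y : Ed (d+1)} (hx : x ∈ lowerHalf d) (hy : y ∈ lowerHalf d) :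
    kern p q (ext v f) x y ≤ c1 p q * (kern p q f (A v x) (A v y) +
      kern p q f (A ((2:ℝ) • v) x) (A ((2:ℝ) • v) y)) := by
  have h8 : ‖v‖ ≤ 8 := (VV_norm hv).trans (by norm_num)
  unfold kern c1
  have nn := fun a b : Ed (d+1) => J_nonneg (p := p) (q := q) (abs_nonneg (inner ℝ (f b - f a) (b - a))) (norm_nonneg (b - a))
  rw [← ENNReal.ofReal_add (nn _ _) (nn _ _), ← ENNReal.ofReal_mul (by positivity)]
  apply ENNReal.ofReal_le_ofReal
  have hid : (inner ℝ (ext v f y - ext v f x) (y - x) : ℝ) =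
      2 * inner ℝ (f (A v y) - f (A v x)) (A v y - A v x) -
      inner ℝ (f (A ((2:ℝ) • v) y) - f (A ((2:ℝ) • v) x)) (A ((2:ℝ) • v) y - A ((2:ℝ) • v) x) := by
    rw [ext_L v f hx, ext_L v f hy, A_sub, A_sub]
    simp only [inner_sub_left, real_inner_smul_left, At_inner]
    ring
  have := J_comb (p := p) (q := q) (D := |(inner ℝ (ext v f y - ext v f x) (y - x) : ℝ)|)
    (D1 := |(inner ℝ (f (A v y) - f (A v x)) (A v y - A v x) : ℝ)|)
    (D2 := |(inner ℝ (f (A ((2:ℝ) • v) y) - f (A ((2:ℝ) • v) x)) (A ((2:ℝ) • v) y - A ((2:ℝ) • v) x) : ℝ)|)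
    (X := 0) (ρ := ‖y - x‖) (ρ1 := ‖A v y - A v x‖) (ρ2 := ‖A ((2:ℝ) • v) y - A ((2:ℝ) • v) x‖)
    hp hq (abs_nonneg _) (abs_nonneg _) (abs_nonneg _) le_rfl (norm_nonneg _) (norm_nonneg _)
    (norm_nonneg _)
    (by
      rw [hid, mul_zero, add_zero]
      refine (abs_sub _ _).trans ?_
      rw [abs_mul, abs_two])
    (by rw [A_sub]; exact norm_A_le h8 _) (by rw [A_sub]; exact norm_A_le (norm_two_smul hv) _)
    (by intro h; rw [norm_eq_zero.mp h]; simp) (by intro h; rw [norm_eq_zero.mp h]; simp)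
  rwa [J_zero_left hp, add_zero] at this

lemma pt_UL {p q : ℝ} (hp : 1 ≤ p) (hq : 0 ≤ q) {v : Ed (d+1)} (hv : v ∈ VV d)
    (f : Ed (d+1) → Ed (d+1)) {x y : Ed (d+1)} (hx : x ∈ upperHalf d) (hy : y ∈ lowerHalf d) :
    kern p q (ext v f) x y ≤ c1 p q * (kern p q f x (A v y) + kern p q f x (A ((2:ℝ) • v) y) +
      ENNReal.ofReal (|(inner ℝ (f (A ((2:ℝ) • v) y) - f (A v y)) v : ℝ)| ^ p) *
        ENNReal.ofReal (‖y - x‖ ^ (-q))) := by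
  have h8 : ‖v‖ ≤ 8 := (VV_norm hv).trans (by norm_num)
  have hx' : 0 < x (Fin.last d) := hx
  have hy' : y (Fin.last d) < 0 := hy
  have hxn : x (Fin.last d) ≤ ‖y - x‖ := by
    have := abs_last_le (y - x)
    rw [PiLp.sub_apply, abs_le] at this
    linarith [this.1]
  have hρ : 0 < ‖y - x‖ := by linarith
  unfold kern c1
  have nn := fun a b : Ed (d+1) => J_nonneg (p := p) (q := q) (abs_nonneg (inner ℝ (f b - f a) (b - a))) (norm_nonneg (b - a))
  rw [← ENNReal.ofReal_mul (by positivity), ← ENNReal.ofReal_add (nn _ _) (nn _ _),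
    ← ENNReal.ofReal_add (add_nonneg (nn _ _) (nn _ _)) (by positivity),
    ← ENNReal.ofReal_mul (by positivity)]
  apply ENNReal.ofReal_le_ofReal
  have hid : (inner ℝ (ext v f y - ext v f x) (y - x) : ℝ) =
      2 * inner ℝ (f (A v y) - f x) (A v y - x) -
      inner ℝ (f (A ((2:ℝ) • v) y) - f x) (A ((2:ℝ) • v) y - x) -
      2 * (x (Fin.last d) * inner ℝ (f (A ((2:ℝ) • v) y) - f (A v y)) v) := by
    rw [ext_U v f hx, ext_L v f hy]
    simp only [inner_sub_left, real_inner_smul_left, At_inner]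
    generalize f (A v y) = a
    generalize f (A ((2:ℝ) • v) y) = b
    simp only [A, inner_sub_right, real_inner_smul_right, PiLp.sub_apply]
    ring
  have := J_comb (p := p) (q := q) (D := |(inner ℝ (ext v f y - ext v f x) (y - x) : ℝ)|)
    (D1 := |(inner ℝ (f (A v y) - f x) (A v y - x) : ℝ)|)
    (D2 := |(inner ℝ (f (A ((2:ℝ) • v) y) - f x) (A ((2:ℝ) • v) y - x) : ℝ)|)
    (X := x (Fin.last d) * |(inner ℝ (f (A ((2:ℝ) • v) y) - f (A v y)) v : ℝ)|)
    (ρ := ‖y - x‖) (ρ1 := ‖A v y - x‖) (ρ2 := ‖A ((2:ℝ) • v) y - x‖)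
    hp hq (abs_nonneg _) (abs_nonneg _) (abs_nonneg _) (by positivity) (norm_nonneg _) (norm_nonneg _)
    (norm_nonneg _)
    (by
      rw [hid]
      refine (abs_sub _ _).trans ?_
      refine (add_le_add (abs_sub _ _) le_rfl).trans ?_
      rw [abs_mul, abs_two, abs_mul, abs_two, abs_mul, abs_of_pos hx'])
    (norm_A_sub_le h8 hx hy) (norm_A_sub_le (norm_two_smul hv) hx hy)
    (by intro h; rw [norm_eq_zero.mp h]; simp) (by intro h; rw [norm_eq_zero.mp h]; simp)
  refine this.trans ?_
  gcongr
  unfold J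
  rw [Real.rpow_neg hρ.le, ← div_eq_mul_inv]
  gcongr
  rw [div_le_iff₀ hρ, mul_comm]
  gcongr

lemma kern_meas_right (p q : ℝ) {f : Ed (d+1) → Ed (d+1)} (hf : Measurable f) (x : Ed (d+1)) :
    Measurable (fun y => kern p q f x y) := by
  unfold kern J
  fun_prop

lemma kern_meas_AA (p q : ℝ) {f : Ed (d+1) → Ed (d+1)} (hf : Measurable f) (w : Ed (d+1)) :
    Measurable (fun z : Ed (d+1) × Ed (d+1) => kern p q f (A w z.1) (A w z.2)) := by
  unfold kern J A
  fun_prop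

lemma kern_meas_A (p q : ℝ) {f : Ed (d+1) → Ed (d+1)} (hf : Measurable f) (w : Ed (d+1)) :
    Measurable (fun z : Ed (d+1) × Ed (d+1) => kern p q f z.1 (A w z.2)) := by
  unfold kern J A
  fun_prop

lemma bound_UL {p q : ℝ} {w : Ed (d+1)} (hw : 2 ≤ w (Fin.last d))
    {f : Ed (d+1) → Ed (d+1)} (hf : Measurable f) :
    ∫⁻ x in upperHalf d, ∫⁻ y in lowerHalf d, kern p q f x (A w y) ≤
      ∫⁻ x in upperHalf d, ∫⁻ y in upperHalf d, kern p q f x y := by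
  refine lintegral_mono (fun x => ?_)
  exact lintegral_A_le hw (F := fun y => kern p q f x y) (kern_meas_right p q hf x)

lemma bound_LL {p q : ℝ} {w : Ed (d+1)} (hw : 2 ≤ w (Fin.last d))
    {f : Ed (d+1) → Ed (d+1)} (hf : Measurable f) :
    ∫⁻ x in lowerHalf d, ∫⁻ y in lowerHalf d, kern p q f (A w x) (A w y) ≤
      ∫⁻ x in upperHalf d, ∫⁻ y in upperHalf d, kern p q f x y := by
  have h1 : ∫⁻ x in lowerHalf d, ∫⁻ y in lowerHalf d, kern p q f (A w x) (A w y) ≤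
      ∫⁻ x in lowerHalf d, ∫⁻ y in upperHalf d, kern p q f (A w x) y := by
    refine lintegral_mono (fun x => ?_)
    exact lintegral_A_le hw (F := fun y => kern p q f (A w x) y) (kern_meas_right p q hf (A w x))
  refine h1.trans ?_
  exact lintegral_A_le hw (F := fun x => ∫⁻ y in upperHalf d, kern p q f x y)
    (Measurable.lintegral_prod_right' (kern_meas p q hf))

set_option maxHeartbeats 800000 in
lemma main_bound {p s : ℝ} (hp : 1 ≤ p) (hs : s ∈ Set.Ioo (0:ℝ) 1) {v : Ed (d+1)} (hv : v ∈ VV d)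
    {f : Ed (d+1) → Ed (d+1)} (hf : Measurable f) :
    projGagP (d+1) s p univ (ext v f) ≤
      projGagP (d+1) s p (upperHalf d) f +
      2 * (c1 p (((d+1 : ℕ) : ℝ) + s * p) * (2 * projGagP (d+1) s p (upperHalf d) f +
        tailC d (((d+1 : ℕ) : ℝ) + s * p) * Phi p (s * p) f v)) +
      c1 p (((d+1 : ℕ) : ℝ) + s * p) * (2 * projGagP (d+1) s p (upperHalf d) f) := by
  rw [projGagP_eq, projGagP_eq]
  set n : ℝ := ((d+1 : ℕ) : ℝ) with hn
  set q : ℝ := n + s * p with hq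
  have hsp : 0 < s * p := mul_pos hs.1 (by linarith)
  have hq0 : 0 ≤ q := by positivity
  have hnq : n < q := by linarith
  set U := upperHalf d
  set L := lowerHalf d
  set G := ∫⁻ x in U, ∫⁻ y in U, kern p q f x y with hG
  set g := ext v f with hg
  have hgm : Measurable g := ext_meas v hf
  have hkg := kern_meas p q hgm
  have hkf := kern_meas p q hf
  have hv1 : 2 ≤ v (Fin.last d) := VV_last hv
  have hv2 : 2 ≤ ((2:ℝ) • v) (Fin.last d) := by simp; linarith
  have inner_meas : ∀ S : Set (Ed (d+1)), Measurable (fun x => ∫⁻ y in S, kern p q g x y) :=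
    fun S => Measurable.lintegral_prod_right' hkg
  have inner_meas_f : ∀ S : Set (Ed (d+1)), Measurable (fun x => ∫⁻ y in S, kern p q f x y) :=
    fun S => Measurable.lintegral_prod_right' hkf
  have UU : ∫⁻ x in U, ∫⁻ y in U, kern p q g x y = G := by
    apply setLIntegral_congr_fun measU
    intro x hx
    apply setLIntegral_congr_fun measU
    intro y hy
    simp only [kern, hg, ext_U v f hx, ext_U v f hy]
  -- pieces
  have B1 : ∀ w : Ed (d+1), 2 ≤ w (Fin.last d) →
      ∫⁻ x in L, ∫⁻ y in L, kern p q f (A w x) (A w y) ≤ G := fun w hw => bound_LL hw hf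
  have B2 : ∀ w : Ed (d+1), 2 ≤ w (Fin.last d) →
      ∫⁻ x in U, ∫⁻ y in L, kern p q f x (A w y) ≤ G := fun w hw => bound_UL hw hf
  have mA : ∀ w : Ed (d+1), Measurable (A w) := fun w => (A_cont w).measurable
  have M1 := fun w : Ed (d+1) => kern_meas_AA p q hf w
  have M2 := fun w : Ed (d+1) => kern_meas_A p q hf w
  -- generic additivity
  have add2 : ∀ (S T : Set (Ed (d+1))) (F H : Ed (d+1) → Ed (d+1) → ℝ≥0∞),
      Measurable (fun z : Ed (d+1) × Ed (d+1) => F z.1 z.2) →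
      ∫⁻ x in S, ∫⁻ y in T, (F x y + H x y) =
        (∫⁻ x in S, ∫⁻ y in T, F x y) + ∫⁻ x in S, ∫⁻ y in T, H x y := by
    intro S T F H hF
    rw [← lintegral_add_left (Measurable.lintegral_prod_right' hF)]
    apply lintegral_congr
    intro x
    exact lintegral_add_left (hF.comp (measurable_prodMk_left (x := x))) _
  have cmul : ∀ (S T : Set (Ed (d+1))) (c : ℝ≥0∞) (F : Ed (d+1) → Ed (d+1) → ℝ≥0∞), c ≠ ∞ →
      ∫⁻ x in S, ∫⁻ y in T, c * F x y = c * ∫⁻ x in S, ∫⁻ y in T, F x y := by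
    intro S T c F hc
    simp_rw [lintegral_const_mul' c _ hc]
  have hc1 : c1 p q ≠ ∞ := ENNReal.ofReal_ne_top
  have LL : ∫⁻ x in L, ∫⁻ y in L, kern p q g x y ≤ c1 p q * (2 * G) := by
    calc _ ≤ ∫⁻ x in L, ∫⁻ y in L, c1 p q * (kern p q f (A v x) (A v y) +
      kern p q f (A ((2:ℝ) • v) x) (A ((2:ℝ) • v) y)) :=
          setLIntegral_mono' measL fun x hx => setLIntegral_mono' measL fun y hy =>
            pt_LL hp hq0 hv f hx hy
      _ ≤ _ := by
          rw [cmul _ _ _ _ hc1, add2 _ _ _ _ (M1 v), two_mul]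
          gcongr
          · exact B1 v hv1
          · exact B1 _ hv2
  let P : Ed (d+1) → ℝ≥0∞ := fun y =>
    ENNReal.ofReal (|(inner ℝ (f (A ((2:ℝ) • v) y) - f (A v y)) v : ℝ)| ^ p)
  have hP : Measurable P := by
    have h1 := mA v
    have h2 := mA ((2:ℝ) • v)
    unfold P; fun_prop
  have R : ∫⁻ x in U, ∫⁻ y in L, P y * ENNReal.ofReal (‖y - x‖ ^ (-q)) ≤
      tailC d q * Phi p (s * p) f v := by
    rw [lintegral_lintegral_swap (by fun_prop)]
    unfold Phi
    rw [← lintegral_const_mul' _ _ (tailC_lt_top hnq).ne]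
    apply setLIntegral_mono' measL
    intro y hy
    have hy' : y (Fin.last d) < 0 := hy
    rw [lintegral_const_mul _ (by fun_prop), ENNReal.ofReal_mul (by positivity)]
    calc _ ≤ P y * (tailC d q * ENNReal.ofReal ((-y (Fin.last d)) ^ (n - q))) := by
          gcongr
          exact tail_bound hnq rfl hy
      _ = _ := by
          have : n - q = -(s * p) := by rw [hq]; ring
          rw [this]
          unfold P
          ring
  have UL : ∫⁻ x in U, ∫⁻ y in L, kern p q g x y ≤
      c1 p q * (2 * G + tailC d q * Phi p (s * p) f v) := by
    calc _ ≤ ∫⁻ x in U, ∫⁻ y in L, c1 p q * (kern p q f x (A v y) + kern p q f x (A ((2:ℝ) • v) y) +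
              P y * ENNReal.ofReal (‖y - x‖ ^ (-q))) :=
          setLIntegral_mono' measU fun x hx => setLIntegral_mono' measL fun y hy =>
            pt_UL hp hq0 hv f hx hy
      _ ≤ _ := by
          rw [cmul _ _ _ _ hc1, add2 _ _ _ _ ((M2 v).add (M2 _)), add2 _ _ _ _ (M2 v), two_mul]
          gcongr
          · exact B2 v hv1
          · exact B2 _ hv2
  have LU : ∫⁻ x in L, ∫⁻ y in U, kern p q g x y = ∫⁻ x in U, ∫⁻ y in L, kern p q g x y := by
    rw [lintegral_lintegral_swap hkg.aemeasurable]
    simp_rw [kern_symm p q g]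
  have tot : ∫⁻ x in univ, ∫⁻ y in univ, kern p q g x y =
      G + 2 * (∫⁻ x in U, ∫⁻ y in L, kern p q g x y) + ∫⁻ x in L, ∫⁻ y in L, kern p q g x y := by
    simp only [Measure.restrict_univ]
    rw [lintegral_split]
    simp_rw [lintegral_split (kern p q g _)]
    rw [lintegral_add_left (inner_meas _), lintegral_add_left (inner_meas _), UU, LU]
    ring
  rw [tot]
  gcongr

end HSExt

/-- **Extension from the half-space controlling the projected seminorm.**
Let `p ∈ [1,∞)`, `s ∈ (0,1)` with `ps ≠ 1`. There is `C = C(p,d,s) > 0` such that for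
every `f ∈ C_c^∞(ℝ^{d+1}_+; ℝ^{d+1})` there exists `g ∈ L^p(ℝ^{d+1}; ℝ^{d+1})` with
`g = f` a.e. on `ℝ^{d+1}_+`, `[g]_{𝒳^s_p(ℝ^{d+1})} < ∞` and
`[g]_{𝒳^s_p(ℝ^{d+1})} ≤ C [f]_{𝒳^s_p(ℝ^{d+1}_+)}`. (The dimension is written as `d + 1`,
realizing an arbitrary dimension `≥ 1`.) -/
theorem halfspace_extension_proj_seminorm (d : ℕ) (p s : ℝ) (hp : 1 ≤ p)
    (hs : s ∈ Set.Ioo (0 : ℝ) 1) (hps : p * s ≠ 1) :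
    ∃ C : ℝ, 0 < C ∧
      ∀ f : Ed (d + 1) → Ed (d + 1),
        ContDiff ℝ (⊤ : ℕ∞) f → HasCompactSupport f → tsupport f ⊆ upperHalf d →
        ∃ g : Ed (d + 1) → Ed (d + 1),
          MemLp g (ENNReal.ofReal p) volume ∧
          (∀ᵐ x ∂(volume : Measure (Ed (d + 1))), x ∈ upperHalf d → g x = f x) ∧
          projGagP (d + 1) s p Set.univ g < ∞ ∧
          projSem (d + 1) s p Set.univ g ≤
            ENNReal.ofReal C * projSem (d + 1) s p (upperHalf d) f := by
  have hp0 : 0 < p := by linarith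
  set q : ℝ := ((d+1 : ℕ) : ℝ) + s * p with hq
  have hnq : ((d+1 : ℕ) : ℝ) < q := by
    have : 0 < s * p := mul_pos hs.1 hp0
    linarith
  let c2 : ℝ≥0∞ := ENNReal.ofReal (4 ^ (p + q)) / volume (HSExt.VV d)
  have hc2 : c2 < ∞ := ENNReal.div_lt_top ENNReal.ofReal_ne_top
    (Metric.measure_ball_pos _ _ one_pos).ne'
  let K : ℝ≥0∞ := 1 + 2 * (HSExt.c1 p q * (2 + HSExt.tailC d q * c2)) + HSExt.c1 p q * 2
  have hc1 : HSExt.c1 p q < ∞ := ENNReal.ofReal_lt_top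
  have htl := HSExt.tailC_lt_top hnq
  have hK : K < ∞ := by
    have h1 : HSExt.tailC d q * c2 < ∞ := ENNReal.mul_lt_top htl hc2
    have h2 : (2 : ℝ≥0∞) < ∞ := by simp
    have h3 : HSExt.c1 p q * (2 + HSExt.tailC d q * c2) < ∞ :=
      ENNReal.mul_lt_top hc1 (ENNReal.add_lt_top.mpr ⟨h2, h1⟩)
    exact ENNReal.add_lt_top.mpr ⟨ENNReal.add_lt_top.mpr ⟨by simp, ENNReal.mul_lt_top h2 h3⟩,
      ENNReal.mul_lt_top hc1 h2⟩
  have hK0 : K ≠ 0 := by simp [K]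
  have hKp : K ^ (1 / p) < ∞ := ENNReal.rpow_lt_top_of_nonneg (by positivity) hK.ne
  have hKp0 : K ^ (1 / p) ≠ 0 := by
    rw [Ne, ENNReal.rpow_eq_zero_iff]
    rintro (⟨h, -⟩ | ⟨h, -⟩)
    · exact hK0 h
    · exact hK.ne h
  refine ⟨(K ^ (1 / p)).toReal, ENNReal.toReal_pos hKp0 hKp.ne, ?_⟩
  intro f hf hc _
  have hfm : Measurable f := hf.continuous.measurable
  obtain ⟨v, hv, hPhi⟩ := HSExt.exists_v hp hs.1 hfm
  have hfin := HSExt.proj_finite hp hs hf hc (upperHalf d)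
  have hmain : projGagP (d + 1) s p univ (HSExt.ext v f) ≤
      K * projGagP (d + 1) s p (upperHalf d) f := by
    refine (HSExt.main_bound hp hs hv hfm).trans ?_
    rw [← hq] at hPhi ⊢
    calc _ ≤ projGagP (d+1) s p (upperHalf d) f +
      2 * (HSExt.c1 p q * (2 * projGagP (d+1) s p (upperHalf d) f +
        HSExt.tailC d q * (c2 * projGagP (d+1) s p (upperHalf d) f))) +
      HSExt.c1 p q * (2 * projGagP (d+1) s p (upperHalf d) f) := by gcongr
      _ = _ := by unfold K; ring
  refine ⟨HSExt.ext v f, HSExt.ext_memLp (HSExt.VV_last hv) hf.continuous hc _,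
    Eventually.of_forall fun x hx => HSExt.ext_U v f hx,
    hmain.trans_lt (ENNReal.mul_lt_top hK hfin), ?_⟩
  rw [ENNReal.ofReal_toReal hKp.ne]
  unfold projSem
  rw [← ENNReal.mul_rpow_of_nonneg _ _ (by positivity)]
  exact ENNReal.rpow_le_rpow hmain (by positivity)
end
end

section
/- Fractional Korn inequality on the half-space: Let s ∈ (0,1), 1 < p < ∞ with sp ≠ 1, and let ℝ^d_+ = {x ∈ ℝ^d : x_d > 0}. Then there exists a constant C = C(d,p,s) > 0 such that for every smooth compactly supported vector field f ∈ C_c^∞(ℝ^d_+; ℝ^d), ∫_{ℝ^d_+} ∫_{ℝ^d_+} |f(x) − f(y)|^p / |x − y|^{d+sp} dx dy ≤ C ∫_{ℝ^d_+} ∫_{ℝ^d_+} |((f(x) − f(y)) · (x − y)/|x − y|)|^p / |x − y|^{d+sp} dx dy. -/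
open MeasureTheory Filter Set
open scoped ENNReal NNReal Topology

noncomputable section

lemma fk_avg (n : ℕ) (p : ℝ) (hp : 0 < p) (x c v : Ed n) (ρ : ℝ) (hρ : 0 < ρ) :
    ENNReal.ofReal (‖v‖ ^ p) * volume (Metric.ball c (ρ / 2)) ≤
      ENNReal.ofReal (2 * 4 ^ p) *
        ∫⁻ z in Metric.ball c ρ, ENNReal.ofReal ((|(inner ℝ (z - x) v : ℝ)| / ρ) ^ p) := by
  rcases eq_or_ne v 0 with rfl | hv
  · simp [Real.zero_rpow hp.ne']
  have hv' : 0 < ‖v‖ := norm_pos_iff.2 hv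
  set u : Ed n := (ρ / 2 / ‖v‖) • v with hu
  have hun : ‖u‖ = ρ / 2 := by
    rw [hu, norm_smul, Real.norm_of_nonneg (by positivity)]; field_simp
  have huv : (inner ℝ u v : ℝ) = ρ / 2 * ‖v‖ := by
    rw [hu, real_inner_smul_left, real_inner_self_eq_norm_sq]; field_simp
  set h : Ed n → ℝ≥0∞ := fun z => ENNReal.ofReal ((|(inner ℝ (z - x) v : ℝ)| / ρ) ^ p) with hh
  have hm : Measurable h := by
    rw [hh]; fun_prop
  have key : ∀ z, ENNReal.ofReal (‖v‖ ^ p) ≤ ENNReal.ofReal (4 ^ p) * (h z + h (z + u)) := by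
    intro z
    rw [hh]
    simp only
    rw [← ENNReal.ofReal_add (by positivity) (by positivity), ← ENNReal.ofReal_mul (by positivity)]
    apply ENNReal.ofReal_le_ofReal
    set a := (inner ℝ (z - x) v : ℝ) with ha
    have hb : (inner ℝ (z + u - x) v : ℝ) = a + ρ / 2 * ‖v‖ := by
      rw [ha, ← huv, ← inner_add_left]; congr 1; abel
    rw [hb]
    set b := a + ρ / 2 * ‖v‖ with hb'
    have h1 : ρ / 2 * ‖v‖ ≤ |a| + |b| := by
      have := abs_sub b a
      have h3 : b - a = ρ / 2 * ‖v‖ := by rw [hb']; ring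
      have := le_abs_self (b - a)
      linarith [abs_sub b a]
    have h2 : ‖v‖ ≤ 2 * (|a| / ρ + |b| / ρ) := by
      rw [← add_div, ← mul_div_assoc, le_div_iff₀ hρ]; linarith
    have ha0 : 0 ≤ |a| / ρ := by positivity
    have hb0 : 0 ≤ |b| / ρ := by positivity
    rcases le_total (|a| / ρ) (|b| / ρ) with hab | hab
    · have : ‖v‖ ≤ 4 * (|b| / ρ) := by linarith
      calc ‖v‖ ^ p ≤ (4 * (|b| / ρ)) ^ p := Real.rpow_le_rpow hv'.le this hp.le
        _ = 4 ^ p * (|b| / ρ) ^ p := Real.mul_rpow (by norm_num) hb0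
        _ ≤ _ := by
          gcongr
          linarith [Real.rpow_nonneg ha0 p]
    · have : ‖v‖ ≤ 4 * (|a| / ρ) := by linarith
      calc ‖v‖ ^ p ≤ (4 * (|a| / ρ)) ^ p := Real.rpow_le_rpow hv'.le this hp.le
        _ = 4 ^ p * (|a| / ρ) ^ p := Real.mul_rpow (by norm_num) ha0
        _ ≤ _ := by
          gcongr
          linarith [Real.rpow_nonneg hb0 p]
  have s1 : ∫⁻ z in Metric.ball c (ρ / 2), h z ≤ ∫⁻ z in Metric.ball c ρ, h z :=
    lintegral_mono_set (Metric.ball_subset_ball (by linarith))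
  have s2 : ∫⁻ z in Metric.ball c (ρ / 2), h (z + u) ≤ ∫⁻ z in Metric.ball c ρ, h z := by
    rw [← lintegral_indicator measurableSet_ball, ← lintegral_indicator measurableSet_ball,
      ← lintegral_add_right_eq_self ((Metric.ball c ρ).indicator h) u]
    apply lintegral_mono
    intro z
    by_cases hz : z ∈ Metric.ball c (ρ / 2)
    · have hz2 : z + u ∈ Metric.ball c ρ := by
        rw [mem_ball_iff_norm] at hz ⊢
        calc ‖z + u - c‖ = ‖(z - c) + u‖ := by congr 1; abel
          _ ≤ ‖z - c‖ + ‖u‖ := norm_add_le _ _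
          _ < ρ := by rw [hun]; linarith
      simp [indicator_of_mem hz, indicator_of_mem hz2]
    · simp [indicator_of_notMem hz]
  calc ENNReal.ofReal (‖v‖ ^ p) * volume (Metric.ball c (ρ / 2))
      = ∫⁻ z in Metric.ball c (ρ / 2), ENNReal.ofReal (‖v‖ ^ p) := by rw [setLIntegral_const]
    _ ≤ ∫⁻ z in Metric.ball c (ρ / 2), ENNReal.ofReal (4 ^ p) * (h z + h (z + u)) :=
        lintegral_mono fun z => key z
    _ = ENNReal.ofReal (4 ^ p) * ((∫⁻ z in Metric.ball c (ρ / 2), h z) +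
          ∫⁻ z in Metric.ball c (ρ / 2), h (z + u)) := by
        rw [lintegral_const_mul _ (by fun_prop), lintegral_add_left hm]
    _ ≤ ENNReal.ofReal (4 ^ p) * ((∫⁻ z in Metric.ball c ρ, h z) + ∫⁻ z in Metric.ball c ρ, h z) := by
        exact mul_le_mul_right (add_le_add s1 s2) _
    _ = _ := by
        rw [ENNReal.ofReal_mul (by norm_num), ← two_mul, ← mul_assoc, mul_comm (ENNReal.ofReal 2)]
        norm_num [hh]

/-- Transfer kernel. -/
def fkK (n : ℕ) (q l a b : ℝ) : ℝ≥0∞ :=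
  if 0 < a ∧ l * a / 4 ≤ b ∧ b ≤ 2 * l * a then
    ENNReal.ofReal ((a ^ q)⁻¹ * ((l * a) ^ n)⁻¹) else 0

lemma fkK_meas (n : ℕ) (q l : ℝ) : Measurable (fun t : ℝ × ℝ => fkK n q l t.1 t.2) := by
  unfold fkK
  refine Measurable.ite ?_ (by fun_prop) measurable_const
  have h1 : MeasurableSet {t : ℝ × ℝ | 0 < t.1} := measurableSet_lt (by fun_prop) (by fun_prop)
  have h2 : MeasurableSet {t : ℝ × ℝ | l * t.1 / 4 ≤ t.2} :=
    measurableSet_le (by fun_prop) (by fun_prop)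
  have h3 : MeasurableSet {t : ℝ × ℝ | t.2 ≤ 2 * l * t.1} :=
    measurableSet_le (by fun_prop) (by fun_prop)
  exact h1.inter (h2.inter h3)

lemma fkK_int (n : ℕ) (q l : ℝ) (hq : 0 < q) (hl : 0 < l) (x z : Ed n) :
    ∫⁻ y : Ed n, fkK n q l ‖y - x‖ ‖z - x‖ ≤
      ENNReal.ofReal (2 ^ q * 8 ^ n * (volume (Metric.ball (0 : Ed n) 1)).toReal *
        l ^ (q - n)) * ENNReal.ofReal (1 / ‖z - x‖ ^ q) := by
  set b := ‖z - x‖ with hb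
  set V := (volume (Metric.ball (0 : Ed n) 1)).toReal with hV
  have hV0 : 0 ≤ V := ENNReal.toReal_nonneg
  have hVe : volume (Metric.ball (0 : Ed n) 1) = ENNReal.ofReal V :=
    (ENNReal.ofReal_toReal measure_ball_lt_top.ne).symm
  rcases (norm_nonneg (z - x)).eq_or_lt with h0 | h0
  · rw [← hb] at h0
    have : ∀ y : Ed n, fkK n q l ‖y - x‖ b = 0 := by
      intro y
      unfold fkK
      rw [if_neg]
      rintro ⟨h1, h2, -⟩
      have : 0 < l * ‖y - x‖ / 4 := by positivity
      linarith
    simp [this]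
  rw [← hb] at h0
  have hbd : ∀ y : Ed n, fkK n q l ‖y - x‖ b ≤ (Metric.closedBall x (4 * b / l)).indicator
      (fun _ => ENNReal.ofReal ((2 * l) ^ q * (b ^ q)⁻¹ * (2 ^ n * (b ^ n)⁻¹))) y := by
    intro y
    unfold fkK
    split_ifs with h
    · obtain ⟨h1, h2, h3⟩ := h
      have hy : y ∈ Metric.closedBall x (4 * b / l) := by
        rw [mem_closedBall_iff_norm, le_div_iff₀ hl]; linarith
      rw [indicator_of_mem hy]
      apply ENNReal.ofReal_le_ofReal
      have e1 : (‖y - x‖ ^ q)⁻¹ ≤ (2 * l) ^ q * (b ^ q)⁻¹ := by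
        rw [← div_eq_mul_inv, ← Real.div_rpow (by positivity) h0.le,
          ← Real.inv_rpow (norm_nonneg _)]
        apply Real.rpow_le_rpow (by positivity) _ hq.le
        rw [inv_eq_one_div, div_le_div_iff₀ h1 h0]; linarith
      have e2 : ((l * ‖y - x‖) ^ n)⁻¹ ≤ 2 ^ n * (b ^ n)⁻¹ := by
        rw [← div_eq_mul_inv, ← div_pow, ← inv_pow]
        apply pow_le_pow_left₀ (by positivity)
        rw [inv_eq_one_div, div_le_div_iff₀ (by positivity) h0]; linarith
      gcongr
    · exact zero_le
  calc ∫⁻ y : Ed n, fkK n q l ‖y - x‖ b ≤ _ := lintegral_mono hbd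
    _ = ENNReal.ofReal ((2 * l) ^ q * (b ^ q)⁻¹ * (2 ^ n * (b ^ n)⁻¹)) *
        volume (Metric.closedBall x (4 * b / l)) := by
        rw [lintegral_indicator measurableSet_closedBall, setLIntegral_const]
    _ = _ := by
        rw [Measure.addHaar_closedBall _ _ (by positivity), finrank_euclideanSpace_fin, hVe,
          ← ENNReal.ofReal_mul (by positivity), ← ENNReal.ofReal_mul (by positivity),
          ← ENNReal.ofReal_mul (by positivity)]
        congr 1
        rw [Real.mul_rpow (by norm_num) hl.le, Real.rpow_sub hl, Real.rpow_natCast, div_pow,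
          mul_pow]
        have : (8 : ℝ) ^ n = 2 ^ n * 4 ^ n := by rw [← mul_pow]; norm_num
        rw [this]
        field_simp

lemma fk_transfer (n : ℕ) (q l : ℝ) (hq : 0 < q) (hl : 0 < l) (Ω : Set (Ed n))
    (G : Ed n → Ed n → ℝ≥0∞) (hG : Measurable (fun t : Ed n × Ed n => G t.1 t.2)) :
    ∫⁻ x in Ω, ∫⁻ y in Ω, ∫⁻ z in Ω, fkK n q l ‖y - x‖ ‖z - x‖ * G x z ≤
      ENNReal.ofReal (2 ^ q * 8 ^ n * (volume (Metric.ball (0 : Ed n) 1)).toReal *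
        l ^ (q - n)) * ∫⁻ x in Ω, ∫⁻ z in Ω, G x z * ENNReal.ofReal (1 / ‖z - x‖ ^ q) := by
  set A := ENNReal.ofReal (2 ^ q * 8 ^ n * (volume (Metric.ball (0 : Ed n) 1)).toReal *
        l ^ (q - n))
  rw [← lintegral_const_mul' _ _ ENNReal.ofReal_ne_top]
  apply lintegral_mono
  intro x
  simp only
  have hGx : Measurable (G x) := hG.comp (measurable_const.prodMk measurable_id)
  have hm : Measurable (fun t : Ed n × Ed n => fkK n q l ‖t.1 - x‖ ‖t.2 - x‖ * G x t.2) := by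
    apply Measurable.mul
    · exact (fkK_meas n q l).comp (f := fun t : Ed n × Ed n => (‖t.1 - x‖, ‖t.2 - x‖))
        (by fun_prop)
    · exact hGx.comp measurable_snd
  rw [lintegral_lintegral_swap hm.aemeasurable, ← lintegral_const_mul' _ _ ENNReal.ofReal_ne_top]
  apply lintegral_mono
  intro z
  simp only
  have hk : Measurable (fun y : Ed n => fkK n q l ‖y - x‖ ‖z - x‖) :=
    (fkK_meas n q l).comp (f := fun y : Ed n => (‖y - x‖, ‖z - x‖)) (by fun_prop)
  rw [lintegral_mul_const _ hk]
  calc _ ≤ (∫⁻ y : Ed n, fkK n q l ‖y - x‖ ‖z - x‖) * G x z := by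
        exact mul_le_mul' (setLIntegral_le_lintegral _ _) le_rfl
    _ ≤ (A * ENNReal.ofReal (1 / ‖z - x‖ ^ q)) * G x z := by
        gcongr; exact fkK_int n q l hq hl x z
    _ = _ := by ring

lemma fk_transfer' (n : ℕ) (q l : ℝ) (hq : 0 < q) (hl : 0 < l) (Ω : Set (Ed n))
    (G : Ed n → Ed n → ℝ≥0∞) (hG : Measurable (fun t : Ed n × Ed n => G t.1 t.2)) :
    ∫⁻ x in Ω, ∫⁻ y in Ω, ∫⁻ z in Ω, fkK n q l ‖y - x‖ ‖z - y‖ * G y z ≤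
      ENNReal.ofReal (2 ^ q * 8 ^ n * (volume (Metric.ball (0 : Ed n) 1)).toReal *
        l ^ (q - n)) * ∫⁻ x in Ω, ∫⁻ z in Ω, G x z * ENNReal.ofReal (1 / ‖z - x‖ ^ q) := by
  have hm : Measurable (fun t : (Ed n × Ed n) × Ed n =>
      fkK n q l ‖t.1.2 - t.1.1‖ ‖t.2 - t.1.2‖ * G t.1.2 t.2) := by
    apply Measurable.mul
    · exact (fkK_meas n q l).comp
        (f := fun t : (Ed n × Ed n) × Ed n => (‖t.1.2 - t.1.1‖, ‖t.2 - t.1.2‖)) (by fun_prop)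
    · exact hG.comp (f := fun t : (Ed n × Ed n) × Ed n => (t.1.2, t.2)) (by fun_prop)
  have hm2 := hm.lintegral_prod_right' (ν := volume.restrict Ω)
  rw [lintegral_lintegral_swap hm2.aemeasurable]
  refine le_trans (le_of_eq ?_) (fk_transfer n q l hq hl Ω G hG)
  simp only [norm_sub_rev]

/-- The basic algebraic identity, turned into an estimate. -/
lemma fk_alg {n : ℕ} (x y z fx fy fz : Ed n) (p l r : ℝ) (hp : 0 < p) (hl : 4 ≤ l) (hr : 0 < r)
    (hxy : ‖y - x‖ = r) (hx0 : 0 < ‖z - x‖) (hy0 : 0 < ‖z - y‖)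
    (hx : ‖z - x‖ ≤ 2 * l * r) (hy : ‖z - y‖ ≤ 2 * l * r) :
    (|(inner ℝ (z - x) (fy - fx) : ℝ)| / (l * r / 2)) ^ p ≤
      12 ^ p * ((|(inner ℝ (fz - fx) (z - x) : ℝ)| / ‖z - x‖) ^ p +
        (|(inner ℝ (fz - fy) (z - y) : ℝ)| / ‖z - y‖) ^ p + l ^ (-p) * ‖fz - fy‖ ^ p) := by
  have hl0 : 0 < l := by linarith
  have id1 : (inner ℝ (z - x) (fy - fx) : ℝ) = inner ℝ (fz - fx) (z - x) -
      inner ℝ (fz - fy) (z - y) - inner ℝ (fz - fy) (y - x) := by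
    simp only [inner_sub_left, inner_sub_right, real_inner_comm]
    ring
  set a := |(inner ℝ (fz - fx) (z - x) : ℝ)| / ‖z - x‖ with ha
  set b := |(inner ℝ (fz - fy) (z - y) : ℝ)| / ‖z - y‖ with hb
  set c := l⁻¹ * ‖fz - fy‖ with hc
  have ha0 : 0 ≤ a := by positivity
  have hb0 : 0 ≤ b := by positivity
  have hc0 : 0 ≤ c := by positivity
  have h1 : |(inner ℝ (fz - fx) (z - x) : ℝ)| ≤ 2 * l * r * a := by
    have : |(inner ℝ (fz - fx) (z - x) : ℝ)| = ‖z - x‖ * a := by rw [ha]; field_simp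
    rw [this]; gcongr
  have h2 : |(inner ℝ (fz - fy) (z - y) : ℝ)| ≤ 2 * l * r * b := by
    have : |(inner ℝ (fz - fy) (z - y) : ℝ)| = ‖z - y‖ * b := by rw [hb]; field_simp
    rw [this]; gcongr
  have h3 : |(inner ℝ (fz - fy) (y - x) : ℝ)| ≤ l * r * c := by
    calc _ ≤ ‖fz - fy‖ * ‖y - x‖ := abs_real_inner_le_norm _ _
      _ = l * r * c := by rw [hxy, hc]; field_simp
  have h4 : |(inner ℝ (z - x) (fy - fx) : ℝ)| / (l * r / 2) ≤ 4 * a + 4 * b + 2 * c := by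
    rw [div_le_iff₀ (by positivity), id1]
    have := abs_sub (inner ℝ (fz - fx) (z - x) - inner ℝ (fz - fy) (z - y) : ℝ)
      (inner ℝ (fz - fy) (y - x))
    have := abs_sub (inner ℝ (fz - fx) (z - x) : ℝ) (inner ℝ (fz - fy) (z - y))
    nlinarith
  have hcp : l ^ (-p) * ‖fz - fy‖ ^ p = c ^ p := by
    rw [hc, Real.mul_rpow (by positivity) (norm_nonneg _), Real.inv_rpow hl0.le,
      Real.rpow_neg hl0.le]
  rw [hcp]
  have hap := Real.rpow_nonneg ha0 p
  have hbp := Real.rpow_nonneg hb0 p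
  have hcp' := Real.rpow_nonneg hc0 p
  have fin : ∀ m, 0 ≤ m → a ≤ m → b ≤ m → c ≤ m → m ^ p ≤ a ^ p + b ^ p + c ^ p →
      (|(inner ℝ (z - x) (fy - fx) : ℝ)| / (l * r / 2)) ^ p ≤ 12 ^ p * (a ^ p + b ^ p + c ^ p) := by
    intro m hm h5 h6 h7 h8
    calc _ ≤ (12 * m) ^ p := Real.rpow_le_rpow (by positivity) (by linarith) hp.le
      _ = 12 ^ p * m ^ p := Real.mul_rpow (by norm_num) hm
      _ ≤ _ := by gcongr
  rcases le_total a b with h | h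
  · rcases le_total b c with h' | h'
    · exact fin c hc0 (h.trans h') h' le_rfl (by linarith)
    · exact fin b hb0 h le_rfl h' (by linarith)
  · rcases le_total a c with h' | h'
    · exact fin c hc0 h' (h.trans h') le_rfl (by linarith)
    · exact fin a ha0 le_rfl h h' (by linarith)

lemma fk_pointwise (d : ℕ) (p q l : ℝ) (hp : 0 < p) (hl : 4 ≤ l)
    (f : Ed (d + 1) → Ed (d + 1)) (x y : Ed (d + 1)) (hx : x ∈ upperHalf d) :
    ENNReal.ofReal (‖f y - f x‖ ^ p / ‖y - x‖ ^ q) ≤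
      ENNReal.ofReal (4 ^ (d + 1) / (volume (Metric.ball (0 : Ed (d + 1)) 1)).toReal *
        (2 * 4 ^ p) * 12 ^ p) *
      ∫⁻ z in upperHalf d,
        (fkK (d + 1) q l ‖y - x‖ ‖z - x‖ *
            ENNReal.ofReal ((|(inner ℝ (f z - f x) (z - x) : ℝ)| / ‖z - x‖) ^ p) +
          fkK (d + 1) q l ‖y - x‖ ‖z - y‖ *
            ENNReal.ofReal ((|(inner ℝ (f z - f y) (z - y) : ℝ)| / ‖z - y‖) ^ p) +
          ENNReal.ofReal (l ^ (-p)) * (fkK (d + 1) q l ‖y - x‖ ‖z - y‖ *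
            ENNReal.ofReal (‖f z - f y‖ ^ p))) := by
  rcases eq_or_ne x y with rfl | hne
  · simp [Real.zero_rpow hp.ne']
  set r := ‖y - x‖ with hr
  have hr0 : 0 < r := by rw [hr, norm_pos_iff, sub_ne_zero]; exact hne.symm
  have hl0 : 0 < l := by linarith
  set V := (volume (Metric.ball (0 : Ed (d + 1)) 1)).toReal with hV
  have hV0 : 0 < V := ENNReal.toReal_pos (Metric.measure_ball_pos _ _ one_pos).ne'
    measure_ball_lt_top.ne
  have hVe : volume (Metric.ball (0 : Ed (d + 1)) 1) = ENNReal.ofReal V :=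
    (ENNReal.ofReal_toReal measure_ball_lt_top.ne).symm
  set en : Ed (d + 1) := EuclideanSpace.single (Fin.last d) 1 with hen
  have hen1 : ‖en‖ = 1 := by simp [hen]
  set c := x + (l * r) • en with hc
  have hlr : 0 < l * r := by positivity
  have avg := fk_avg (d + 1) p hp x c (f y - f x) (l * r / 2) (by positivity)
  rw [Measure.addHaar_ball_of_pos _ _ (by positivity), finrank_euclideanSpace_fin, hVe] at avg
  have hbnd : ∀ z ∈ Metric.ball c (l * r / 2), z ∈ upperHalf d ∧ l * r / 4 ≤ ‖z - x‖ ∧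
      ‖z - x‖ ≤ 2 * l * r ∧ l * r / 4 ≤ ‖z - y‖ ∧ ‖z - y‖ ≤ 2 * l * r := by
    intro z hz
    rw [mem_ball_iff_norm] at hz
    have e1 : z - x = (z - c) + (l * r) • en := by rw [hc]; abel
    have e2 : z - y = (z - x) - (y - x) := by abel
    have e3 : ‖(l * r) • en‖ = l * r := by
      rw [norm_smul, hen1, Real.norm_of_nonneg hlr.le, mul_one]
    have hrl : r ≤ l * r / 4 := by nlinarith
    have u1 : ‖z - x‖ ≤ ‖z - c‖ + l * r := by
      have := norm_add_le (z - c) ((l * r) • en)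
      rwa [← e1, e3] at this
    have u2 : l * r ≤ ‖z - x‖ + ‖z - c‖ := by
      have : (l * r) • en = (z - x) - (z - c) := by rw [e1]; abel
      rw [← e3, this]; exact norm_sub_le _ _
    have u3 : ‖z - y‖ ≤ ‖z - x‖ + r := by rw [e2, hr]; exact norm_sub_le _ _
    have u4 : ‖z - x‖ ≤ ‖z - y‖ + r := by
      have : z - x = (z - y) + (y - x) := by abel
      rw [this, hr]; exact norm_add_le _ _
    refine ⟨?_, by linarith, by linarith, by linarith, by linarith⟩
    have w1 : |(z - c) (Fin.last d)| ≤ ‖z - c‖ := PiLp.norm_apply_le (z - c) (Fin.last d)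
    have w2 : (z - c) (Fin.last d) = z (Fin.last d) - x (Fin.last d) - l * r := by
      simp [hc, hen]; ring
    have w3 := neg_abs_le ((z - c) (Fin.last d))
    have hx' : 0 < x (Fin.last d) := hx
    change 0 < z (Fin.last d)
    linarith
  set k0 := ENNReal.ofReal ((r ^ q)⁻¹ * ((l * r) ^ (d + 1))⁻¹) with hk0
  have hK : ∀ t, l * r / 4 ≤ t → t ≤ 2 * l * r → fkK (d + 1) q l r t = k0 := by
    intro t h1 h2
    unfold fkK
    rw [if_pos ⟨hr0, h1, h2⟩]
  set S : Ed (d + 1) → ℝ≥0∞ := fun z => (fkK (d + 1) q l r ‖z - x‖ *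
            ENNReal.ofReal ((|(inner ℝ (f z - f x) (z - x) : ℝ)| / ‖z - x‖) ^ p) +
          fkK (d + 1) q l r ‖z - y‖ *
            ENNReal.ofReal ((|(inner ℝ (f z - f y) (z - y) : ℝ)| / ‖z - y‖) ^ p) +
          ENNReal.ofReal (l ^ (-p)) * (fkK (d + 1) q l r ‖z - y‖ *
            ENNReal.ofReal (‖f z - f y‖ ^ p))) with hS
  have step : ∀ z ∈ Metric.ball c (l * r / 2),
      k0 * ENNReal.ofReal ((|(inner ℝ (z - x) (f y - f x) : ℝ)| / (l * r / 2)) ^ p) ≤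
        ENNReal.ofReal (12 ^ p) * S z := by
    intro z hz
    obtain ⟨-, b1, b2, b3, b4⟩ := hbnd z hz
    rw [hS]
    simp only
    rw [hK _ b1 b2, hK _ b3 b4]
    have := fk_alg x y z (f x) (f y) (f z) p l r hp hl hr0 hr.symm (by linarith) (by linarith) b2 b4
    calc _ ≤ k0 * ENNReal.ofReal (12 ^ p *
          ((|(inner ℝ (f z - f x) (z - x) : ℝ)| / ‖z - x‖) ^ p +
        (|(inner ℝ (f z - f y) (z - y) : ℝ)| / ‖z - y‖) ^ p + l ^ (-p) * ‖f z - f y‖ ^ p)) := by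
          gcongr
      _ = _ := by
        rw [ENNReal.ofReal_mul (by positivity), ENNReal.ofReal_add (by positivity) (by positivity),
          ENNReal.ofReal_add (by positivity) (by positivity), ENNReal.ofReal_mul (by positivity)]
        ring
  have hB : ENNReal.ofReal (‖f y - f x‖ ^ p / r ^ q) = ENNReal.ofReal (4 ^ (d + 1) / V) * k0 *
      (ENNReal.ofReal (‖f y - f x‖ ^ p) * (ENNReal.ofReal ((l * r / 2 / 2) ^ (d + 1)) *
        ENNReal.ofReal V)) := by
    rw [hk0, ← ENNReal.ofReal_mul (by positivity), ← ENNReal.ofReal_mul (by positivity),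
      ← ENNReal.ofReal_mul (by positivity), ← ENNReal.ofReal_mul (by positivity)]
    congr 1
    have : l * r / 2 / 2 = l * r / 4 := by ring
    rw [this, div_pow]
    have : r ^ q ≠ 0 := by positivity
    field_simp
  rw [hB]
  calc _ ≤ ENNReal.ofReal (4 ^ (d + 1) / V) * k0 * (ENNReal.ofReal (2 * 4 ^ p) *
        ∫⁻ z in Metric.ball c (l * r / 2),
          ENNReal.ofReal ((|(inner ℝ (z - x) (f y - f x) : ℝ)| / (l * r / 2)) ^ p)) := by
        gcongr
    _ = ENNReal.ofReal (4 ^ (d + 1) / V) * ENNReal.ofReal (2 * 4 ^ p) *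
        ∫⁻ z in Metric.ball c (l * r / 2),
          k0 * ENNReal.ofReal ((|(inner ℝ (z - x) (f y - f x) : ℝ)| / (l * r / 2)) ^ p) := by
        rw [lintegral_const_mul' _ _ ENNReal.ofReal_ne_top]; ring
    _ ≤ ENNReal.ofReal (4 ^ (d + 1) / V) * ENNReal.ofReal (2 * 4 ^ p) *
        ∫⁻ z in Metric.ball c (l * r / 2), ENNReal.ofReal (12 ^ p) * S z := by
        exact mul_le_mul' le_rfl (setLIntegral_mono' measurableSet_ball step)
    _ = ENNReal.ofReal (4 ^ (d + 1) / V * (2 * 4 ^ p) * 12 ^ p) *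
        ∫⁻ z in Metric.ball c (l * r / 2), S z := by
        rw [lintegral_const_mul' _ _ ENNReal.ofReal_ne_top,
          ENNReal.ofReal_mul (p := 4 ^ (d + 1) / V * (2 * 4 ^ p)) (by positivity),
          ENNReal.ofReal_mul (p := 4 ^ (d + 1) / V) (by positivity)]
        ring
    _ ≤ _ := by
        exact mul_le_mul' le_rfl (lintegral_mono_set fun z hz => (hbnd z hz).1)

lemma fk_psi (n : ℕ) (hn : 0 < n) (s p : ℝ) (hs0 : 0 < s) (hs1 : s < 1) (hp : 1 < p) :
    Integrable (fun h : Ed n => (fun t : ℝ => if t ≤ 1 then t ^ (p - (n + s * p))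
      else t ^ (-(n + s * p))) ‖h‖) volume := by
  have : Nontrivial (Ed n) := by
    have : Nonempty (Fin n) := ⟨⟨0, hn⟩⟩
    infer_instance
  have hsp : 0 < s * p := by positivity
  have hc : ((n - 1 : ℕ) : ℝ) = n - 1 := by rw [Nat.cast_sub hn]; simp
  refine (integrable_fun_norm_addHaar (volume : Measure (Ed n)) (f := fun t : ℝ =>
    if t ≤ 1 then t ^ (p - (n + s * p)) else t ^ (-(n + s * p)))).2 ?_
  rw [finrank_euclideanSpace_fin,
    ← Set.Ioc_union_Ioi_eq_Ioi (zero_le_one (α := ℝ))]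
  refine IntegrableOn.union ?_ ?_
  · have : IntegrableOn (fun t : ℝ => t ^ (p - s * p - 1)) (Set.Ioc 0 1) := by
      rw [← intervalIntegrable_iff_integrableOn_Ioc_of_le zero_le_one]
      exact intervalIntegral.intervalIntegrable_rpow' (by nlinarith)
    refine this.congr_fun (fun t ht => ?_) measurableSet_Ioc
    simp only [ht.2, if_true, smul_eq_mul]
    rw [← Real.rpow_natCast, ← Real.rpow_add ht.1, hc]
    congr 1; ring
  · have : IntegrableOn (fun t : ℝ => t ^ (-(s * p) - 1)) (Set.Ioi 1) :=
      integrableOn_Ioi_rpow_of_lt (by linarith) one_pos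
    refine this.congr_fun (fun t ht => ?_) measurableSet_Ioi
    have ht' : 1 < t := ht
    simp only [not_le.2 ht', if_false, smul_eq_mul]
    rw [← Real.rpow_natCast, ← Real.rpow_add (by linarith), hc]
    congr 1; ring

lemma fk_finite (n : ℕ) (hn : 0 < n) (s p : ℝ) (hs0 : 0 < s) (hs1 : s < 1) (hp : 1 < p)
    (Ω : Set (Ed n)) (f : Ed n → Ed n) (hf : ContDiff ℝ (⊤ : ℕ∞) f) (hfc : HasCompactSupport f) :
    gagP n s p Ω f ≠ ⊤ := by
  obtain ⟨L, hL⟩ := ContDiff.lipschitzWith_of_hasCompactSupport hfc hf (by simp)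
  obtain ⟨M, hM⟩ := hfc.exists_bound_of_continuous hf.continuous
  have hM0 : 0 ≤ M := (norm_nonneg _).trans (hM 0)
  have hp0 : 0 < p := by linarith
  set ψ : ℝ → ℝ := fun t : ℝ => if t ≤ 1 then t ^ (p - (n + s * p))
      else t ^ (-(n + s * p)) with hψ
  have hint : Integrable (fun h : Ed n => ψ ‖h‖) volume := fk_psi n hn s p hs0 hs1 hp
  have hψm : Measurable ψ := by
    rw [hψ]
    exact Measurable.ite measurableSet_Iic (by fun_prop) (by fun_prop)
  set A : ℝ := (L : ℝ) ^ p + (2 * M) ^ p with hA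
  have hA0 : 0 ≤ A := by positivity
  have hψ0 : ∀ t, 0 ≤ t → 0 ≤ ψ t := by
    intro t ht
    simp only [hψ]
    split_ifs <;> positivity
  set J := ∫⁻ h : Ed n, ENNReal.ofReal (ψ ‖h‖) with hJ
  have hJt : J ≠ ⊤ := hint.lintegral_lt_top.ne
  set T := tsupport f with hT
  have hTm : MeasurableSet T := (isClosed_tsupport f).measurableSet
  have hpt : ∀ x y : Ed n, ENNReal.ofReal (‖f y - f x‖ ^ p / ‖y - x‖ ^ ((n : ℝ) + s * p)) ≤
      T.indicator (fun _ => ENNReal.ofReal A) x * ENNReal.ofReal (ψ ‖y - x‖) +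
      T.indicator (fun _ => ENNReal.ofReal A) y * ENNReal.ofReal (ψ ‖x - y‖) := by
    intro x y
    rcases eq_or_ne x y with rfl | hne
    · simp [Real.zero_rpow hp0.ne']
    have hr0 : 0 < ‖y - x‖ := by rw [norm_pos_iff, sub_ne_zero]; exact hne.symm
    have main : ENNReal.ofReal (‖f y - f x‖ ^ p / ‖y - x‖ ^ ((n : ℝ) + s * p)) ≤
        ENNReal.ofReal A * ENNReal.ofReal (ψ ‖y - x‖) := by
      rw [← ENNReal.ofReal_mul hA0]
      apply ENNReal.ofReal_le_ofReal
      have b1 : ‖f y - f x‖ ^ p ≤ (L : ℝ) ^ p * ‖y - x‖ ^ p := by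
        rw [← Real.mul_rpow (by positivity) (by positivity)]
        apply Real.rpow_le_rpow (norm_nonneg _) _ hp0.le
        simpa [dist_eq_norm] using hL.dist_le_mul y x
      have b2 : ‖f y - f x‖ ^ p ≤ (2 * M) ^ p := by
        apply Real.rpow_le_rpow (norm_nonneg _) _ hp0.le
        linarith [norm_sub_le (f y) (f x), hM x, hM y]
      have hL0 : 0 ≤ (L : ℝ) ^ p := by positivity
      have hM0' : 0 ≤ (2 * M) ^ p := by positivity
      simp only [hψ]
      split_ifs with h
      · rw [Real.rpow_sub hr0, ← mul_div_assoc]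
        gcongr
        refine b1.trans ?_
        gcongr
        linarith
      · rw [Real.rpow_neg hr0.le, ← div_eq_mul_inv]
        gcongr
        linarith
    by_cases hx : x ∈ T
    · rw [indicator_of_mem hx]
      exact main.trans le_self_add
    · by_cases hy : y ∈ T
      · rw [indicator_of_mem hy, norm_sub_rev x y]
        exact main.trans le_add_self
      · rw [image_eq_zero_of_notMem_tsupport hx, image_eq_zero_of_notMem_tsupport hy]
        simp [Real.zero_rpow hp0.ne']
  have hJx : ∀ x : Ed n, ∫⁻ y : Ed n, ENNReal.ofReal (ψ ‖y - x‖) = J := fun x =>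
    lintegral_sub_right_eq_self (fun h : Ed n => ENNReal.ofReal (ψ ‖h‖)) x
  have hm1 : Measurable (fun t : Ed n × Ed n =>
      T.indicator (fun _ => ENNReal.ofReal A) t.1 * ENNReal.ofReal (ψ ‖t.2 - t.1‖)) := by
    apply Measurable.mul
    · exact (measurable_const.indicator hTm).comp measurable_fst
    · exact ENNReal.measurable_ofReal.comp (hψm.comp (by fun_prop))
  have I1 : ∫⁻ x : Ed n, ∫⁻ y : Ed n,
      T.indicator (fun _ => ENNReal.ofReal A) x * ENNReal.ofReal (ψ ‖y - x‖) =
        ENNReal.ofReal A * volume T * J := by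
    have : ∀ x : Ed n, ∫⁻ y : Ed n,
      T.indicator (fun _ => ENNReal.ofReal A) x * ENNReal.ofReal (ψ ‖y - x‖) =
        T.indicator (fun _ => ENNReal.ofReal A) x * J := by
      intro x
      have hmx : Measurable (fun y : Ed n => ENNReal.ofReal (ψ ‖y - x‖)) :=
        ENNReal.measurable_ofReal.comp (hψm.comp (by fun_prop))
      rw [lintegral_const_mul _ hmx, hJx]
    simp_rw [this]
    rw [lintegral_mul_const _ (measurable_const.indicator hTm), lintegral_indicator hTm,
      setLIntegral_const]
  have hm2 : Measurable (fun t : Ed n × Ed n =>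
      T.indicator (fun _ => ENNReal.ofReal A) t.2 * ENNReal.ofReal (ψ ‖t.1 - t.2‖)) :=
    hm1.comp measurable_swap
  have I2 : ∫⁻ x : Ed n, ∫⁻ y : Ed n,
      T.indicator (fun _ => ENNReal.ofReal A) y * ENNReal.ofReal (ψ ‖x - y‖) =
        ENNReal.ofReal A * volume T * J := by
    rw [lintegral_lintegral_swap hm2.aemeasurable, I1]
  have bound : gagP n s p Ω f ≤ ENNReal.ofReal A * volume T * J +
      ENNReal.ofReal A * volume T * J := by
    unfold gagP
    calc _ ≤ ∫⁻ x : Ed n, ∫⁻ y : Ed n,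
          ENNReal.ofReal (‖f y - f x‖ ^ p / ‖y - x‖ ^ ((n : ℝ) + s * p)) :=
          (setLIntegral_le_lintegral _ _).trans
            (lintegral_mono fun x => setLIntegral_le_lintegral _ _)
      _ ≤ ∫⁻ x : Ed n, ∫⁻ y : Ed n,
          (T.indicator (fun _ => ENNReal.ofReal A) x * ENNReal.ofReal (ψ ‖y - x‖) +
          T.indicator (fun _ => ENNReal.ofReal A) y * ENNReal.ofReal (ψ ‖x - y‖)) :=
          lintegral_mono fun x => lintegral_mono fun y => hpt x y
      _ = ∫⁻ x : Ed n, ((∫⁻ y : Ed n,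
          T.indicator (fun _ => ENNReal.ofReal A) x * ENNReal.ofReal (ψ ‖y - x‖)) +
          ∫⁻ y : Ed n, T.indicator (fun _ => ENNReal.ofReal A) y * ENNReal.ofReal (ψ ‖x - y‖)) := by
          refine lintegral_congr fun x => ?_
          exact lintegral_add_left (hm1.comp measurable_prodMk_left) _
      _ = _ := by
          rw [lintegral_add_left hm1.lintegral_prod_right', I1, I2]
  have hTt : volume T ≠ ⊤ := hfc.isCompact.measure_lt_top.ne
  refine ne_top_of_le_ne_top ?_ bound
  have : ENNReal.ofReal A * volume T * J ≠ ⊤ :=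
    ENNReal.mul_ne_top (ENNReal.mul_ne_top ENNReal.ofReal_ne_top hTt) hJt
  exact ENNReal.add_ne_top.2 ⟨this, this⟩

lemma fk_lin {α : Type*} [MeasurableSpace α] (μ : Measure α) (a b h : α → ℝ≥0∞) (c : ℝ≥0∞)
    (ha : Measurable a) (hb : Measurable b) (hc : c ≠ ⊤) :
    ∫⁻ z, (a z + b z + c * h z) ∂μ = (∫⁻ z, a z ∂μ) + (∫⁻ z, b z ∂μ) + c * ∫⁻ z, h z ∂μ := by
  have hab : Measurable (fun z => a z + b z) := ha.add hb
  rw [lintegral_add_left hab, lintegral_add_left ha, lintegral_const_mul' _ _ hc]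

lemma fk_main_ineq (d : ℕ) (s p l : ℝ) (hs0 : 0 < s) (hp : 1 < p) (hl : 4 ≤ l)
    (f : Ed (d + 1) → Ed (d + 1)) (hf : Continuous f) :
    gagP (d + 1) s p (upperHalf d) f ≤
      ENNReal.ofReal (4 ^ (d + 1) / (volume (Metric.ball (0 : Ed (d + 1)) 1)).toReal *
        (2 * 4 ^ p) * 12 ^ p) * (ENNReal.ofReal (2 ^ (((d + 1 : ℕ) : ℝ) + s * p) * 8 ^ (d + 1) *
          (volume (Metric.ball (0 : Ed (d + 1)) 1)).toReal * l ^ (s * p)) *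
        (2 * projGagP (d + 1) s p (upperHalf d) f +
          ENNReal.ofReal (l ^ (-p)) * gagP (d + 1) s p (upperHalf d) f)) := by
  set q : ℝ := ((d + 1 : ℕ) : ℝ) + s * p with hq
  have hq0 : 0 < q := by positivity
  have hp0 : 0 < p := by linarith
  have hl0 : 0 < l := by linarith
  have hH : MeasurableSet (upperHalf d) := by
    have : Measurable (fun x : Ed (d + 1) => x (Fin.last d)) := by fun_prop
    exact measurableSet_lt measurable_const this
  set B := ENNReal.ofReal (4 ^ (d + 1) / (volume (Metric.ball (0 : Ed (d + 1)) 1)).toReal *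
        (2 * 4 ^ p) * 12 ^ p)
  have hqd : q - ((d + 1 : ℕ) : ℝ) = s * p := by rw [hq]; ring
  set e : Ed (d + 1) → Ed (d + 1) → ℝ≥0∞ := fun x z =>
    ENNReal.ofReal ((|(inner ℝ (f z - f x) (z - x) : ℝ)| / ‖z - x‖) ^ p) with he
  set g : Ed (d + 1) → Ed (d + 1) → ℝ≥0∞ := fun x z => ENNReal.ofReal (‖f z - f x‖ ^ p) with hg
  have hfm : Measurable f := hf.measurable
  have hem : Measurable (fun t : Ed (d + 1) × Ed (d + 1) => e t.1 t.2) := by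
    simp only [he]; fun_prop
  have hgm : Measurable (fun t : Ed (d + 1) × Ed (d + 1) => g t.1 t.2) := by
    simp only [hg]; fun_prop
  have t1 := fk_transfer (d + 1) q l hq0 hl0 (upperHalf d) e hem
  have t2 := fk_transfer' (d + 1) q l hq0 hl0 (upperHalf d) e hem
  have t3 := fk_transfer' (d + 1) q l hq0 hl0 (upperHalf d) g hgm
  rw [hqd] at t1 t2 t3
  set D := ENNReal.ofReal (2 ^ q * 8 ^ (d + 1) *
          (volume (Metric.ball (0 : Ed (d + 1)) 1)).toReal * l ^ (s * p))
  have hP : ∫⁻ x in upperHalf d, ∫⁻ z in upperHalf d, e x z * ENNReal.ofReal (1 / ‖z - x‖ ^ q) =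
      projGagP (d + 1) s p (upperHalf d) f := by
    unfold projGagP
    refine lintegral_congr fun x => lintegral_congr fun z => ?_
    rw [he, ← ENNReal.ofReal_mul (by positivity), mul_one_div]
  have hI : ∫⁻ x in upperHalf d, ∫⁻ z in upperHalf d, g x z * ENNReal.ofReal (1 / ‖z - x‖ ^ q) =
      gagP (d + 1) s p (upperHalf d) f := by
    unfold gagP
    refine lintegral_congr fun x => lintegral_congr fun z => ?_
    rw [hg, ← ENNReal.ofReal_mul (by positivity), mul_one_div]
  rw [hP] at t1 t2
  rw [hI] at t3
  have pw0 : ∀ x ∈ upperHalf d, ∀ y,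
      ENNReal.ofReal (‖f y - f x‖ ^ p / ‖y - x‖ ^ q) ≤
        B * ∫⁻ z in upperHalf d, (fkK (d + 1) q l ‖y - x‖ ‖z - x‖ * e x z +
          fkK (d + 1) q l ‖y - x‖ ‖z - y‖ * e y z +
          ENNReal.ofReal (l ^ (-p)) * (fkK (d + 1) q l ‖y - x‖ ‖z - y‖ * g y z)) :=
    fun x hx y => fk_pointwise d p q l hp0 hl f x y hx
  clear hP hI
  clear_value e g
  have mK1 : Measurable (fun t : (Ed (d + 1) × Ed (d + 1)) × Ed (d + 1) =>
      fkK (d + 1) q l ‖t.1.2 - t.1.1‖ ‖t.2 - t.1.1‖ * e t.1.1 t.2) := by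
    apply Measurable.mul
    · exact (fkK_meas (d + 1) q l).comp (f := fun t : (Ed (d + 1) × Ed (d + 1)) × Ed (d + 1) =>
        (‖t.1.2 - t.1.1‖, ‖t.2 - t.1.1‖)) (by fun_prop)
    · exact hem.comp (f := fun t : (Ed (d + 1) × Ed (d + 1)) × Ed (d + 1) => (t.1.1, t.2))
        (by fun_prop)
  have mK2 : Measurable (fun t : (Ed (d + 1) × Ed (d + 1)) × Ed (d + 1) =>
      fkK (d + 1) q l ‖t.1.2 - t.1.1‖ ‖t.2 - t.1.2‖ * e t.1.2 t.2) := by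
    apply Measurable.mul
    · exact (fkK_meas (d + 1) q l).comp (f := fun t : (Ed (d + 1) × Ed (d + 1)) × Ed (d + 1) =>
        (‖t.1.2 - t.1.1‖, ‖t.2 - t.1.2‖)) (by fun_prop)
    · exact hem.comp (f := fun t : (Ed (d + 1) × Ed (d + 1)) × Ed (d + 1) => (t.1.2, t.2))
        (by fun_prop)
  have mJ1 := mK1.lintegral_prod_right' (ν := volume.restrict (upperHalf d))
  have mJ2 := mK2.lintegral_prod_right' (ν := volume.restrict (upperHalf d))
  set F1 : Ed (d + 1) → Ed (d + 1) → ℝ≥0∞ := fun x y =>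
    ∫⁻ z in upperHalf d, fkK (d + 1) q l ‖y - x‖ ‖z - x‖ * e x z with hF1
  set F2 : Ed (d + 1) → Ed (d + 1) → ℝ≥0∞ := fun x y =>
    ∫⁻ z in upperHalf d, fkK (d + 1) q l ‖y - x‖ ‖z - y‖ * e y z with hF2
  set F3 : Ed (d + 1) → Ed (d + 1) → ℝ≥0∞ := fun x y =>
    ∫⁻ z in upperHalf d, fkK (d + 1) q l ‖y - x‖ ‖z - y‖ * g y z with hF3
  have pw : ∀ x ∈ upperHalf d, ∀ y,
      ENNReal.ofReal (‖f y - f x‖ ^ p / ‖y - x‖ ^ q) ≤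
        B * (F1 x y + F2 x y + ENNReal.ofReal (l ^ (-p)) * F3 x y) := by
    intro x hx y
    refine (pw0 x hx y).trans (le_of_eq ?_)
    congr 1
    have a1 : Measurable fun z => fkK (d + 1) q l ‖y - x‖ ‖z - x‖ * e x z :=
      mK1.comp (f := fun z => ((x, y), z)) (by fun_prop)
    have a2 : Measurable fun z => fkK (d + 1) q l ‖y - x‖ ‖z - y‖ * e y z :=
      mK2.comp (f := fun z => ((x, y), z)) (by fun_prop)
    exact fk_lin _ _ _ _ _ a1 a2 ENNReal.ofReal_ne_top
  calc gagP (d + 1) s p (upperHalf d) f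
      ≤ ∫⁻ x in upperHalf d, ∫⁻ y in upperHalf d,
          B * (F1 x y + F2 x y + ENNReal.ofReal (l ^ (-p)) * F3 x y) := by
        unfold gagP
        exact setLIntegral_mono' hH fun x hx => lintegral_mono fun y => pw x hx y
    _ = B * ((∫⁻ x in upperHalf d, ∫⁻ y in upperHalf d, F1 x y) +
          (∫⁻ x in upperHalf d, ∫⁻ y in upperHalf d, F2 x y) +
          ENNReal.ofReal (l ^ (-p)) * ∫⁻ x in upperHalf d, ∫⁻ y in upperHalf d, F3 x y) := by
        have b1 : Measurable fun x => ∫⁻ y in upperHalf d, F1 x y := mJ1.lintegral_prod_right'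
        have b2 : Measurable fun x => ∫⁻ y in upperHalf d, F2 x y := mJ2.lintegral_prod_right'
        rw [← fk_lin _ _ _ _ _ b1 b2 ENNReal.ofReal_ne_top,
          ← lintegral_const_mul' _ _ ENNReal.ofReal_ne_top]
        refine lintegral_congr fun x => ?_
        have a1 : Measurable fun y => F1 x y := mJ1.comp (f := fun y => (x, y)) (by fun_prop)
        have a2 : Measurable fun y => F2 x y := mJ2.comp (f := fun y => (x, y)) (by fun_prop)
        rw [lintegral_const_mul' _ _ ENNReal.ofReal_ne_top,
          fk_lin _ _ _ _ _ a1 a2 ENNReal.ofReal_ne_top]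
    _ ≤ B * (D * projGagP (d + 1) s p (upperHalf d) f + D * projGagP (d + 1) s p (upperHalf d) f +
          ENNReal.ofReal (l ^ (-p)) * (D * gagP (d + 1) s p (upperHalf d) f)) := by
        gcongr
    _ = _ := by ring

/-- **Fractional Korn inequality on the half-space.** Let `s ∈ (0,1)`, `1 < p < ∞` with
`sp ≠ 1`. There is `C = C(d,p,s) > 0` such that every
`f ∈ C_c^∞(ℝ^{d+1}_+; ℝ^{d+1})` satisfies
`[f]_{W^{s,p}(ℝ^{d+1}_+)}^p ≤ C [f]_{𝒳^s_p(ℝ^{d+1}_+)}^p`.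
(The dimension is written as `d + 1`, realizing an arbitrary dimension `≥ 1`.) -/
theorem fractional_korn_halfspace (d : ℕ) (s p : ℝ) (hs : s ∈ Set.Ioo (0 : ℝ) 1)
    (hp : 1 < p) (hps : s * p ≠ 1) :
    ∃ C : ℝ, 0 < C ∧
      ∀ f : Ed (d + 1) → Ed (d + 1),
        ContDiff ℝ (⊤ : ℕ∞) f → HasCompactSupport f → tsupport f ⊆ upperHalf d →
        gagP (d + 1) s p (upperHalf d) f ≤
          ENNReal.ofReal C * projGagP (d + 1) s p (upperHalf d) f := by
  obtain ⟨hs0, hs1⟩ := hs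
  set V := (volume (Metric.ball (0 : Ed (d + 1)) 1)).toReal with hV
  have hV0 : 0 < V := ENNReal.toReal_pos (Metric.measure_ball_pos _ _ one_pos).ne'
    measure_ball_lt_top.ne
  have hp0 : 0 < p := by linarith
  set B : ℝ := 4 ^ (d + 1) / V * (2 * 4 ^ p) * 12 ^ p with hB
  set D : ℝ := 2 ^ (((d + 1 : ℕ) : ℝ) + s * p) * 8 ^ (d + 1) * V with hD
  have hB0 : 0 < B := by positivity
  have hD0 : 0 < D := by positivity
  have hex : ∃ l : ℝ, 4 ≤ l ∧ B * D * l ^ (-(p - s * p)) ≤ 1 / 2 := by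
    have h1 : Tendsto (fun l : ℝ => B * D * l ^ (-(p - s * p))) atTop (𝓝 (B * D * 0)) :=
      (tendsto_rpow_neg_atTop (by nlinarith)).const_mul _
    rw [mul_zero] at h1
    have h2 := h1.eventually (ge_mem_nhds (show (0 : ℝ) < 1 / 2 by norm_num))
    obtain ⟨l, hl⟩ := (h2.and (eventually_ge_atTop 4)).exists
    exact ⟨l, hl.2, hl.1⟩
  obtain ⟨l, hl4, hl⟩ := hex
  have hl0 : 0 < l := by linarith
  refine ⟨4 * (B * D * l ^ (s * p)), by positivity, ?_⟩
  intro f hf hfc _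
  have hfin := fk_finite (d + 1) (Nat.succ_pos d) s p hs0 hs1 hp (upperHalf d) f hf hfc
  have hmain := fk_main_ineq d s p l hs0 hp hl4 f hf.continuous
  rw [← hV, ← hB, ← hD] at hmain
  set I := gagP (d + 1) s p (upperHalf d) f
  set P := projGagP (d + 1) s p (upperHalf d) f
  rcases eq_or_ne P ⊤ with hP | hP
  · rw [hP, ENNReal.mul_top]
    · exact le_top
    · rw [Ne, ENNReal.ofReal_eq_zero, not_le]; positivity
  have hIe : I = ENNReal.ofReal I.toReal := (ENNReal.ofReal_toReal hfin).symm
  have hPe : P = ENNReal.ofReal P.toReal := (ENNReal.ofReal_toReal hP).symm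
  have hI0 : 0 ≤ I.toReal := ENNReal.toReal_nonneg
  have hP0 : 0 ≤ P.toReal := ENNReal.toReal_nonneg
  rw [hIe, hPe] at hmain ⊢
  set i := I.toReal
  set j := P.toReal
  have h2 : (2 : ℝ≥0∞) = ENNReal.ofReal 2 := by simp
  rw [h2, ← ENNReal.ofReal_mul (by positivity), ← ENNReal.ofReal_mul (by positivity),
    ← ENNReal.ofReal_add (by positivity) (by positivity), ← ENNReal.ofReal_mul (by positivity),
    ← ENNReal.ofReal_mul (by positivity), ENNReal.ofReal_le_ofReal_iff (by positivity)] at hmain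
  rw [← ENNReal.ofReal_mul (by positivity)]
  apply ENNReal.ofReal_le_ofReal
  have hpow : l ^ (-(p - s * p)) = l ^ (s * p) * l ^ (-p) := by
    rw [← Real.rpow_add hl0]; congr 1; ring
  rw [hpow] at hl
  have h3 := mul_le_mul_of_nonneg_right hl hI0
  nlinarith
end
end

section
/- Density of smooth compactly supported fields by mollification: Let Ω ⊆ ℝ^d be open, s ∈ (0,1), p ≥ 2. Suppose u ∈ L^p(ℝ^d; ℝ^d) with [u]_{𝒳^s_p(ℝ^d)} < ∞ and the support of u is a compact subset of Ω. Then there exists a sequence (u_n) of vector fields in C_c^∞(Ω; ℝ^d) such that ‖u_n − u‖_{L^p(ℝ^d)} → 0 and [u_n − u]_{𝒳^s_p(ℝ^d)} → 0 as n → ∞; the u_n can be taken to be mollifications u ∗ φ_δ of u with a standard mollifier φ_δ, δ → 0. -/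
open MeasureTheory Filter Set
open scoped ENNReal NNReal Topology

noncomputable section

/-- The mollification `(u ∗ φ_δ)(x) = ∫ δ^{−d} φ(y/δ) u(x − y) dy`. -/
def mollify (d : ℕ) (φ : Ed d → ℝ) (δ : ℝ) (u : Ed d → Ed d) (x : Ed d) : Ed d :=
  ∫ y, (δ ^ (-(d : ℝ)) * φ (δ⁻¹ • y)) • u (x - y)

/-- Continuity of translations in `L^p`. -/
lemma tendsto_translate {X F : Type*} [NormedAddCommGroup X] [MeasurableSpace X] [BorelSpace X]
    [NormedAddCommGroup F] (μ : Measure X) [IsLocallyFiniteMeasure μ]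
    [μ.InnerRegularCompactLTTop] [μ.IsAddLeftInvariant] (p : ℝ≥0∞) (hp1 : 1 ≤ p) (hpt : p ≠ ∞)
    (f : X → F) (hf : MemLp f p μ) :
    Tendsto (fun v : X => eLpNorm (fun x => f (v + x) - f x) p μ) (𝓝 0) (𝓝 0) := by
  have : Fact (1 ≤ p) := ⟨hp1⟩
  have : Fact (p ≠ ∞) := ⟨hpt⟩
  have hcont : Continuous (fun v : X => DomAddAct.mk v +ᵥ hf.toLp f) := by
    have h1 : Continuous (fun v : X => DomAddAct.mk v) := DomAddAct.continuous_mk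
    exact h1.vadd continuous_const
  have h0 := hcont.tendsto 0
  have h00 : DomAddAct.mk (0 : X) +ᵥ hf.toLp f = hf.toLp f := by
    simp
  rw [h00, tendsto_iff_edist_tendsto_0] at h0
  refine h0.congr fun v => ?_
  rw [DomAddAct.mk_vadd_toLp, Lp.edist_toLp_toLp]
  rfl

/-- Jensen for probability measures. -/
lemma lintegral_rpow_jensen {E : Type*} [MeasurableSpace E] (ν : Measure E)
    [IsProbabilityMeasure ν] (p : ℝ) (hp : 1 ≤ p) (g : E → ℝ≥0∞) (hg : Measurable g) :
    (∫⁻ w, g w ∂ν) ^ p ≤ ∫⁻ w, g w ^ p ∂ν := by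
  have h := eLpNorm'_le_eLpNorm'_of_exponent_le (f := g) (μ := ν) (p := 1) (q := p)
    one_pos hp hg.aestronglyMeasurable
  simp only [eLpNorm', enorm_eq_self, ENNReal.rpow_one, div_one] at h
  calc _ ≤ ((∫⁻ w, g w ^ p ∂ν) ^ (1 / p)) ^ p := by gcongr
    _ = _ := by
      rw [← ENNReal.rpow_mul, one_div, inv_mul_cancel₀ (by positivity), ENNReal.rpow_one]

/-- Averages of small translates converge. -/
lemma average_bound {X E F : Type*} [NormedAddCommGroup X] [MeasurableSpace X] [BorelSpace X]
    [SecondCountableTopology X]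
    [NormedAddCommGroup E] [MeasurableSpace E] [BorelSpace E] [SecondCountableTopology E]
    [NormedAddCommGroup F] [MeasurableSpace F] [BorelSpace F] [SecondCountableTopology F]
    (μ : Measure X) [SFinite μ] (ν : Measure E) [IsProbabilityMeasure ν]
    (p : ℝ) (hp : 1 ≤ p) (f : X → F) (hf : Measurable f) (L : E → X) (hL : Measurable L)
    (ε : ℝ≥0∞) (hε : ∀ᵐ w ∂ν, eLpNorm (fun x => f (L w + x) - f x) (ENNReal.ofReal p) μ ≤ ε)
    {G : Type*} [NormedAddCommGroup G] (g : X → G)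
    (hg : ∀ x, ‖g x‖ₑ ≤ ∫⁻ w, ‖f (L w + x) - f x‖ₑ ∂ν) :
    ∫⁻ x, ‖g x‖ₑ ^ p ∂μ ≤ ε ^ p := by
  have hp0 : 0 < p := by positivity
  have hm : Measurable (fun q : X × E => ‖f (L q.2 + q.1) - f q.1‖ₑ) := by fun_prop
  calc ∫⁻ x, ‖g x‖ₑ ^ p ∂μ ≤ ∫⁻ x, (∫⁻ w, ‖f (L w + x) - f x‖ₑ ∂ν) ^ p ∂μ := by
        gcongr with x; exact hg x
    _ ≤ ∫⁻ x, (∫⁻ w, ‖f (L w + x) - f x‖ₑ ^ p ∂ν) ∂μ := by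
        gcongr with x
        exact lintegral_rpow_jensen ν p hp _ (by fun_prop)
    _ = ∫⁻ w, (∫⁻ x, ‖f (L w + x) - f x‖ₑ ^ p ∂μ) ∂ν := by
        apply lintegral_lintegral_swap
        exact (hm.pow_const p).aemeasurable
    _ ≤ ∫⁻ w, ε ^ p ∂ν := by
        apply lintegral_mono_ae
        filter_upwards [hε] with w hw
        rw [eLpNorm_eq_lintegral_rpow_enorm_toReal (by simpa using hp0) (by simp),
          ENNReal.toReal_ofReal hp0.le] at hw
        calc _ = ((∫⁻ x, ‖f (L w + x) - f x‖ₑ ^ p ∂μ) ^ (1 / p)) ^ p := by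
              rw [← ENNReal.rpow_mul, one_div, inv_mul_cancel₀ (by positivity), ENNReal.rpow_one]
          _ ≤ _ := by gcongr
    _ = ε ^ p := by simp

/-- Convergence of averages of translates. -/
lemma average_tendsto {X E F : Type*} [NormedAddCommGroup X] [MeasurableSpace X] [BorelSpace X]
    [SecondCountableTopology X]
    [NormedAddCommGroup E] [MeasurableSpace E] [BorelSpace E] [SecondCountableTopology E]
    [NormedAddCommGroup F] [MeasurableSpace F] [BorelSpace F] [SecondCountableTopology F]
    (μ : Measure X) [SFinite μ] [IsLocallyFiniteMeasure μ]
    [μ.InnerRegularCompactLTTop] [μ.IsAddLeftInvariant]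
    (ν : ℕ → Measure E) [∀ n, IsProbabilityMeasure (ν n)]
    (p : ℝ) (hp : 1 ≤ p) (f : X → F) (hf : Measurable f)
    (hfp : ∫⁻ x, ‖f x‖ₑ ^ p ∂μ < ∞) (L : E → X) (hL : Continuous L) (hL0 : L 0 = 0)
    (δ : ℕ → ℝ) (hδ : Tendsto δ atTop (𝓝 0)) (hν : ∀ n, ∀ᵐ w ∂(ν n), ‖w‖ < δ n)
    {G : Type*} [NormedAddCommGroup G] (g : ℕ → X → G)
    (hg : ∀ n x, ‖g n x‖ₑ ≤ ∫⁻ w, ‖f (L w + x) - f x‖ₑ ∂(ν n)) :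
    Tendsto (fun n => (∫⁻ x, ‖g n x‖ₑ ^ p ∂μ) ^ (1 / p)) atTop (𝓝 0) := by
  have hp0 : 0 < p := by positivity
  have hmem : MemLp f (ENNReal.ofReal p) μ := by
    refine ⟨hf.aestronglyMeasurable, ?_⟩
    rw [eLpNorm_lt_top_iff_lintegral_rpow_enorm_lt_top (by simpa using hp0) (by simp),
      ENNReal.toReal_ofReal hp0.le]
    exact hfp
  have ht := tendsto_translate μ (ENNReal.ofReal p) (by simpa using hp) (by simp) f hmem
  have htL := ht.comp (hL0 ▸ hL.tendsto 0 : Tendsto L (𝓝 0) (𝓝 0))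
  rw [ENNReal.tendsto_nhds_zero] at htL ⊢
  intro ε hε
  obtain ⟨r, hr, hr'⟩ := Metric.eventually_nhds_iff.1 (htL ε hε)
  filter_upwards [hδ.eventually (gt_mem_nhds hr)] with n hn
  have := average_bound μ (ν n) p hp f hf L hL.measurable ε ?_ (g n) (hg n)
  · calc _ ≤ (ε ^ p) ^ (1 / p) := by gcongr
      _ = ε := by rw [← ENNReal.rpow_mul, mul_one_div_cancel hp0.ne', ENNReal.rpow_one]
  · filter_upwards [hν n] with w hw
    exact hr' (by simpa using hw.trans hn)

/-- The rescaled mollifier `φ_δ`. -/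
def rho (d : ℕ) (φ : Ed d → ℝ) (δ : ℝ) (y : Ed d) : ℝ := δ ^ (-(d : ℝ)) * φ (δ⁻¹ • y)

/-- The probability measure `φ_δ dy`. -/
def nuM (d : ℕ) (φ : Ed d → ℝ) (δ : ℝ) : Measure (Ed d) :=
  volume.withDensity fun y => ENNReal.ofReal (rho d φ δ y)

lemma rho_nonneg (d : ℕ) (φ : Ed d → ℝ) (δ : ℝ) (hδ : 0 < δ) (h0 : ∀ x, 0 ≤ φ x) (y : Ed d) :
    0 ≤ rho d φ δ y := mul_nonneg (by positivity) (h0 _)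

lemma rho_integral (d : ℕ) (φ : Ed d → ℝ) (δ : ℝ) (hδ : 0 < δ) (h1 : (∫ x, φ x) = 1) :
    ∫ y, rho d φ δ y = 1 := by
  unfold rho
  rw [integral_const_mul, Measure.integral_comp_inv_smul, h1]
  simp only [finrank_euclideanSpace, Fintype.card_fin, smul_eq_mul, mul_one]
  rw [abs_of_pos (by positivity), Real.rpow_neg hδ.le, Real.rpow_natCast,
    inv_mul_cancel₀ (by positivity)]

lemma rho_contDiff (d : ℕ) (φ : Ed d → ℝ) (δ : ℝ) (h : ContDiff ℝ (⊤ : ℕ∞) φ) :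
    ContDiff ℝ (⊤ : ℕ∞) (rho d φ δ) := by
  unfold rho
  exact contDiff_const.mul (h.comp (contDiff_const_smul δ⁻¹))

lemma rho_support (d : ℕ) (φ : Ed d → ℝ) (δ : ℝ) (hδ : 0 < δ)
    (h : Function.support φ ⊆ Metric.ball 0 1) :
    Function.support (rho d φ δ) ⊆ Metric.ball 0 δ := by
  intro y hy
  have h2 : φ (δ⁻¹ • y) ≠ 0 := fun h0 => hy (by simp [rho, h0])
  have := h h2
  rw [mem_ball_zero_iff, norm_smul, norm_inv, Real.norm_of_nonneg hδ.le] at this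
  rw [mem_ball_zero_iff]
  rwa [inv_mul_lt_iff₀ hδ, mul_one] at this

lemma rho_compact (d : ℕ) (φ : Ed d → ℝ) (δ : ℝ) (hδ : 0 < δ)
    (h : Function.support φ ⊆ Metric.ball 0 1) : HasCompactSupport (rho d φ δ) := by
  refine HasCompactSupport.intro (isCompact_closedBall (0 : Ed d) δ) fun x hx => ?_
  by_contra h0
  exact hx (Metric.ball_subset_closedBall (rho_support d φ δ hδ h h0))

lemma nuM_prob (d : ℕ) (φ : Ed d → ℝ) (δ : ℝ) (hδ : 0 < δ) (hc : ContDiff ℝ (⊤ : ℕ∞) φ)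
    (h0 : ∀ x, 0 ≤ φ x) (hs : Function.support φ ⊆ Metric.ball 0 1) (h1 : (∫ x, φ x) = 1) :
    IsProbabilityMeasure (nuM d φ δ) := by
  constructor
  rw [nuM, withDensity_apply _ MeasurableSet.univ, setLIntegral_univ,
    ← ofReal_integral_eq_lintegral_ofReal, rho_integral d φ δ hδ h1, ENNReal.ofReal_one]
  · exact (rho_contDiff d φ δ hc).continuous.integrable_of_hasCompactSupport
      (rho_compact d φ δ hδ hs)
  · exact ae_of_all _ fun y => mul_nonneg (by positivity) (h0 _)

lemma nuM_ae (d : ℕ) (φ : Ed d → ℝ) (δ : ℝ) (hδ : 0 < δ) (hc : ContDiff ℝ (⊤ : ℕ∞) φ)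
    (hs : Function.support φ ⊆ Metric.ball 0 1) :
    ∀ᵐ w ∂(nuM d φ δ), ‖w‖ < δ := by
  rw [nuM, ae_withDensity_iff (rho_contDiff d φ δ hc).continuous.measurable.ennreal_ofReal]
  refine ae_of_all _ fun w hw => ?_
  have : rho d φ δ w ≠ 0 := fun h => hw (by simp [h])
  simpa using rho_support d φ δ hδ hs this

lemma mollify_eq (d : ℕ) (φ : Ed d → ℝ) (δ : ℝ) (hδ : 0 < δ) (hc : ContDiff ℝ (⊤ : ℕ∞) φ)
    (h0 : ∀ x, 0 ≤ φ x) (u : Ed d → Ed d) (x : Ed d) :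
    mollify d φ δ u x = ∫ w, u (x - w) ∂(nuM d φ δ) := by
  rw [nuM, integral_withDensity_eq_integral_toReal_smul
    (rho_contDiff d φ δ hc).continuous.measurable.ennreal_ofReal (ae_of_all _ fun _ => by simp)]
  unfold mollify
  congr 1
  ext1 y
  rw [ENNReal.toReal_ofReal (rho_nonneg d φ δ hδ h0 y)]
  rfl

lemma nuM_integrable (d : ℕ) (φ : Ed d → ℝ) (δ : ℝ) (hδ : 0 < δ) (hc : ContDiff ℝ (⊤ : ℕ∞) φ)
    (h0 : ∀ x, 0 ≤ φ x) (hs : Function.support φ ⊆ Metric.ball 0 1)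
    (u : Ed d → Ed d) (hu : LocallyIntegrable u volume) (x : Ed d) :
    Integrable (fun w => u (x - w)) (nuM d φ δ) := by
  rw [nuM, integrable_withDensity_iff_integrable_smul'
    (rho_contDiff d φ δ hc).continuous.measurable.ennreal_ofReal (ae_of_all _ fun _ => by simp)]
  have := (rho_compact d φ δ hδ hs).convolutionExists_left (ContinuousLinearMap.lsmul ℝ ℝ)
    (rho_contDiff d φ δ hc).continuous hu x
  refine this.integrable.congr (ae_of_all _ fun y => ?_)
  simp only [ContinuousLinearMap.lsmul_apply]
  rw [ENNReal.toReal_ofReal (rho_nonneg d φ δ hδ h0 y)]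

lemma mollify_contDiff (d : ℕ) (φ : Ed d → ℝ) (δ : ℝ) (hδ : 0 < δ) (hc : ContDiff ℝ (⊤ : ℕ∞) φ)
    (hs : Function.support φ ⊆ Metric.ball 0 1)
    (u : Ed d → Ed d) (hu : LocallyIntegrable u volume) :
    ContDiff ℝ (⊤ : ℕ∞) (mollify d φ δ u) :=
  (rho_compact d φ δ hδ hs).contDiff_convolution_left (ContinuousLinearMap.lsmul ℝ ℝ)
    (rho_contDiff d φ δ hc) hu

open scoped Pointwise in
lemma mollify_tsupport (d : ℕ) (φ : Ed d → ℝ) (δ : ℝ) (hδ : 0 < δ)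
    (hs : Function.support φ ⊆ Metric.ball 0 1) (u : Ed d → Ed d) :
    tsupport (mollify d φ δ u) ⊆ Metric.cthickening δ (tsupport u) := by
  refine closure_minimal ?_ Metric.isClosed_cthickening
  intro x hx
  have : x ∈ Function.support u + Function.support (rho d φ δ) :=
    support_convolution_subset_swap (ContinuousLinearMap.lsmul ℝ ℝ) (μ := volume) hx
  obtain ⟨a, ha, b, hb, rfl⟩ := this
  have hb' := rho_support d φ δ hδ hs hb
  rw [mem_ball_zero_iff] at hb'
  exact Metric.mem_cthickening_of_dist_le _ a _ _ (subset_tsupport _ ha) (by simpa using hb'.le)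

/-- The weighted projected difference quotient. -/
def Qf (d : ℕ) (s p : ℝ) (f : Ed d → Ed d) (q : Ed d × Ed d) : ℝ :=
  (inner ℝ (f (q.1 + q.2) - f q.1) q.2 : ℝ) * (‖q.2‖ * ‖q.2‖ ^ (((d : ℝ) + s * p) / p))⁻¹

lemma Qf_enorm (d : ℕ) (s p : ℝ) (hp : 0 < p) (f : Ed d → Ed d) (x z : Ed d) :
    ‖Qf d s p f (x, z)‖ₑ ^ p = ENNReal.ofReal ((|(inner ℝ (f (x + z) - f x) z : ℝ)| / ‖z‖) ^ p /
      ‖z‖ ^ ((d : ℝ) + s * p)) := by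
  rw [Real.enorm_eq_ofReal_abs, ENNReal.ofReal_rpow_of_nonneg (abs_nonneg _) hp.le]
  congr 1
  have hz := norm_nonneg z
  simp only [Qf]
  rw [abs_mul, abs_of_nonneg (a := (_)⁻¹) (by positivity), mul_inv, ← mul_assoc, ← div_eq_mul_inv,
    ← div_eq_mul_inv, Real.div_rpow (by positivity) (by positivity), ← Real.rpow_mul hz,
    div_mul_cancel₀ _ hp.ne']

lemma Qf_measurable (d : ℕ) (s p : ℝ) (f : Ed d → Ed d) (hf : Measurable f) :
    Measurable (Qf d s p f) := by
  unfold Qf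
  have h1 : Measurable fun q : Ed d × Ed d => f (q.1 + q.2) - f q.1 := by fun_prop
  have h2 : Measurable fun q : Ed d × Ed d => (inner ℝ (f (q.1 + q.2) - f q.1) q.2 : ℝ) :=
    h1.inner measurable_snd
  fun_prop

lemma projGagP_eq (d : ℕ) (s p : ℝ) (hp : 0 < p) (f : Ed d → Ed d) (hf : Measurable f) :
    projGagP d s p Set.univ f = ∫⁻ q, ‖Qf d s p f q‖ₑ ^ p ∂((volume : Measure (Ed d)).prod volume) := by
  rw [lintegral_prod _ ((Qf_measurable d s p f hf).enorm.pow_const p).aemeasurable]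
  unfold projGagP
  simp only [setLIntegral_univ]
  congr 1
  ext1 x
  simp_rw [Qf_enorm d s p hp]
  rw [← lintegral_add_left_eq_self _ x]
  simp

lemma projGagP_congr (d : ℕ) (s p : ℝ) (f g : Ed d → Ed d) (h : f =ᵐ[volume] g) :
    projGagP d s p Set.univ f = projGagP d s p Set.univ g := by
  unfold projGagP
  simp only [setLIntegral_univ]
  refine lintegral_congr_ae ?_
  filter_upwards [h] with x hx
  refine lintegral_congr_ae ?_
  filter_upwards [h] with y hy
  rw [hx, hy]

lemma mollify_congr (d : ℕ) (φ : Ed d → ℝ) (δ : ℝ) (f g : Ed d → Ed d) (h : f =ᵐ[volume] g) :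
    mollify d φ δ f = mollify d φ δ g := by
  ext1 x
  unfold mollify
  refine integral_congr_ae ?_
  have := (Measure.measurePreserving_sub_left volume x).quasiMeasurePreserving.ae_eq h
  filter_upwards [this] with y hy
  simp only [Function.comp] at hy
  rw [hy]

lemma bound_one (d : ℕ) (φ : Ed d → ℝ) (δ : ℝ) (hδ : 0 < δ) (hc : ContDiff ℝ (⊤ : ℕ∞) φ)
    (h0 : ∀ x, 0 ≤ φ x) (hs : Function.support φ ⊆ Metric.ball 0 1) (h1 : (∫ x, φ x) = 1)
    (u : Ed d → Ed d) (hu : LocallyIntegrable u volume) (x : Ed d) :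
    ‖mollify d φ δ u x - u x‖ₑ ≤ ∫⁻ w, ‖u (-w + x) - u x‖ₑ ∂(nuM d φ δ) := by
  have := nuM_prob d φ δ hδ hc h0 hs h1
  have hi := nuM_integrable d φ δ hδ hc h0 hs u hu x
  rw [mollify_eq d φ δ hδ hc h0]
  have : (∫ w, u (x - w) ∂(nuM d φ δ)) - u x = ∫ w, (u (-w + x) - u x) ∂(nuM d φ δ) := by
    simp_rw [neg_add_eq_sub]
    rw [integral_sub hi (integrable_const _)]
    simp
  rw [this]
  exact enorm_integral_le_lintegral_enorm _

lemma bound_two (d : ℕ) (s p : ℝ) (φ : Ed d → ℝ) (δ : ℝ) (hδ : 0 < δ)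
    (hc : ContDiff ℝ (⊤ : ℕ∞) φ)
    (h0 : ∀ x, 0 ≤ φ x) (hs : Function.support φ ⊆ Metric.ball 0 1) (h1 : (∫ x, φ x) = 1)
    (u : Ed d → Ed d) (hu : LocallyIntegrable u volume) (q : Ed d × Ed d) :
    ‖Qf d s p (fun x => mollify d φ δ u x - u x) q‖ₑ ≤
      ∫⁻ w, ‖Qf d s p u ((-w, 0) + q) - Qf d s p u q‖ₑ ∂(nuM d φ δ) := by
  have := nuM_prob d φ δ hδ hc h0 hs h1
  obtain ⟨x, z⟩ := q
  have hi := nuM_integrable d φ δ hδ hc h0 hs u hu x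
  have hi2 := nuM_integrable d φ δ hδ hc h0 hs u hu (x + z)
  have hi3 : Integrable (fun w => (u (x + z - w) - u (x - w)) - (u (x + z) - u x)) (nuM d φ δ) :=
    (hi2.sub hi).sub (integrable_const _)
  have key : Qf d s p (fun x => mollify d φ δ u x - u x) (x, z) =
      ∫ w, (Qf d s p u ((-w, 0) + (x, z)) - Qf d s p u (x, z)) ∂(nuM d φ δ) := by
    simp only [Qf, mollify_eq d φ δ hδ hc h0, Prod.mk_add_mk, zero_add, ← sub_mul, ← inner_sub_left]
    rw [integral_mul_const]
    congr 1
    have e : ∀ w, -w + x + z = x + z - w := fun w => by abel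
    simp_rw [e, neg_add_eq_sub]
    simp_rw [real_inner_comm z]
    rw [integral_inner hi3, integral_sub (f := fun w => u (x + z - w) - u (x - w)) (hi2.sub hi)
      (integrable_const _), integral_sub hi2 hi]
    congr 1
    simp
    abel
  rw [key]
  exact enorm_integral_le_lintegral_enorm _

/-- **Density of smooth compactly supported fields by mollification.** Let `Ω ⊆ ℝ^d` be
open, `s ∈ (0,1)`, `p ≥ 2`, and let `u ∈ 𝒳^s_p(ℝ^d)` (i.e. `u ∈ L^p` with
`[u]_{𝒳^s_p(ℝ^d)} < ∞`) have compact support contained in `Ω`. Then there are a standard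
mollifier `φ` and scales `δ_n > 0`, `δ_n → 0`, such that the mollifications
`u_n = u ∗ φ_{δ_n}` are in `C_c^∞(Ω; ℝ^d)` and `u_n → u` both in `L^p(ℝ^d)` and in the
`𝒳^s_p(ℝ^d)` seminorm. -/
theorem density_smooth_compactly_supported (d : ℕ) (Ω : Set (Ed d)) (hΩ : IsOpen Ω)
    (s p : ℝ) (hs : s ∈ Set.Ioo (0 : ℝ) 1) (hp : 2 ≤ p)
    (u : Ed d → Ed d) (hu : MemLp u (ENNReal.ofReal p) volume)
    (hX : projGagP d s p Set.univ u < ∞)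
    (hc : IsCompact (tsupport u)) (hsub : tsupport u ⊆ Ω) :
    ∃ (φ : Ed d → ℝ) (δ : ℕ → ℝ),
      ContDiff ℝ (⊤ : ℕ∞) φ ∧ (∀ x, 0 ≤ φ x) ∧ Function.support φ ⊆ Metric.ball 0 1 ∧
      (∫ x, φ x) = 1 ∧
      (∀ n, 0 < δ n) ∧ Tendsto δ atTop (𝓝 0) ∧
      (∀ n, ContDiff ℝ (⊤ : ℕ∞) (mollify d φ (δ n) u) ∧
        HasCompactSupport (mollify d φ (δ n) u) ∧ tsupport (mollify d φ (δ n) u) ⊆ Ω) ∧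
      Tendsto (fun n => eLpNorm (fun x => mollify d φ (δ n) u x - u x)
        (ENNReal.ofReal p) volume) atTop (𝓝 0) ∧
      Tendsto (fun n => projSem d s p Set.univ (fun x => mollify d φ (δ n) u x - u x))
        atTop (𝓝 0) := by
  have hp0 : 0 < p := by linarith
  obtain ⟨v, hvm, huv⟩ := hu.1.aemeasurable
  have hvp : MemLp v (ENNReal.ofReal p) volume := hu.ae_eq huv
  have hp1 : (1 : ℝ≥0∞) ≤ ENNReal.ofReal p := by
    rw [ENNReal.one_le_ofReal]; linarith
  have hul : LocallyIntegrable u volume := hu.locallyIntegrable hp1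
  have hvl : LocallyIntegrable v volume := hvp.locallyIntegrable hp1
  obtain ⟨δ₀, hδ₀, hthick⟩ := hc.exists_cthickening_subset_open hΩ hsub
  let b : ContDiffBump (0 : Ed d) := ⟨1 / 2, 1, by norm_num, by norm_num⟩
  let φ : Ed d → ℝ := b.normed volume
  have hφc : ContDiff ℝ (⊤ : ℕ∞) φ := b.contDiff_normed
  have hφ0 : ∀ x, 0 ≤ φ x := b.nonneg_normed
  have hφs : Function.support φ ⊆ Metric.ball 0 1 := b.support_normed_eq.subset
  have hφ1 : (∫ x, φ x) = 1 := b.integral_normed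
  let δ : ℕ → ℝ := fun n => δ₀ * (1 / ((n : ℝ) + 1))
  have hδp : ∀ n, 0 < δ n := fun n => by positivity
  have hδt : Tendsto δ atTop (𝓝 0) := by
    simpa [δ] using (tendsto_one_div_add_atTop_nhds_zero_nat (𝕜 := ℝ)).const_mul δ₀
  have hδle : ∀ n, δ n ≤ δ₀ := fun n => by
    have : 1 / ((n : ℝ) + 1) ≤ 1 := by
      rw [div_le_one (by positivity)]; linarith [(Nat.cast_nonneg n : (0 : ℝ) ≤ n)]
    simpa [δ] using mul_le_mul_of_nonneg_left this hδ₀.le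
  have hprob : ∀ n, IsProbabilityMeasure (nuM d φ (δ n)) := fun n =>
    nuM_prob d φ (δ n) (hδp n) hφc hφ0 hφs hφ1
  have hball : ∀ n, ∀ᵐ w ∂(nuM d φ (δ n)), ‖w‖ < δ n := fun n =>
    nuM_ae d φ (δ n) (hδp n) hφc hφs
  have hmol : ∀ n, mollify d φ (δ n) u = mollify d φ (δ n) v := fun n =>
    mollify_congr d φ (δ n) u v huv
  have hdiff : ∀ n, (fun x => mollify d φ (δ n) u x - u x) =ᵐ[volume]
      (fun x => mollify d φ (δ n) v x - v x) := fun n => by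
    filter_upwards [huv] with x hx
    rw [hmol n, hx]
  refine ⟨φ, δ, hφc, hφ0, hφs, hφ1, hδp, hδt, fun n => ?_, ?_, ?_⟩
  · have ht : tsupport (mollify d φ (δ n) u) ⊆ Metric.cthickening (δ n) (tsupport u) :=
      mollify_tsupport d φ (δ n) (hδp n) hφs u
    refine ⟨mollify_contDiff d φ (δ n) (hδp n) hφc hφs u hul, ?_,
      (ht.trans (Metric.cthickening_mono (hδle n) _)).trans hthick⟩
    exact hc.cthickening.of_isClosed_subset (isClosed_tsupport _) ht
  · have hfin : ∫⁻ x, ‖v x‖ₑ ^ p < ∞ := by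
      have := lintegral_rpow_enorm_lt_top_of_eLpNorm_lt_top (by simpa using hp0) (by simp) hvp.2
      rwa [ENNReal.toReal_ofReal hp0.le] at this
    have := average_tendsto volume (fun n => nuM d φ (δ n)) p (by linarith) v hvm hfin
      (fun w => -w) continuous_neg neg_zero δ hδt hball
      (fun n x => mollify d φ (δ n) v x - v x)
      (fun n x => bound_one d φ (δ n) (hδp n) hφc hφ0 hφs hφ1 v hvl x)
    refine this.congr fun n => ?_
    rw [eLpNorm_congr_ae (hdiff n),
      eLpNorm_eq_lintegral_rpow_enorm_toReal (by simpa using hp0) (by simp),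
      ENNReal.toReal_ofReal hp0.le]
  · have hfin := hX
    rw [projGagP_congr d s p u v huv, projGagP_eq d s p hp0 v hvm] at hfin
    have := average_tendsto ((volume : Measure (Ed d)).prod volume) (fun n => nuM d φ (δ n)) p
      (by linarith) (Qf d s p v) (Qf_measurable d s p v hvm) hfin
      (fun w => (-w, 0)) (by fun_prop) (by simp) δ hδt hball
      (fun n => Qf d s p (fun x => mollify d φ (δ n) v x - v x))
      (fun n q => bound_two d s p φ (δ n) (hδp n) hφc hφ0 hφs hφ1 v hvl q)
    refine this.congr fun n => ?_
    rw [projSem, projGagP_congr d s p _ _ (hdiff n), projGagP_eq d s p hp0]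
    exact (mollify_contDiff d φ (δ n) (hδp n) hφc hφs v hvl).continuous.measurable.sub hvm
end
end
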